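/- arXiv:2407.13634 — 8 statements merged into one kernel-verified Lean document; each statement's English description precedes it below -/
import Mathlib

section
/- If an allocation (A_1,…,A_n) of indivisible items to n agents with additive valuations is EF^{+0}_{-v}, then for every integer w with 0 ≤ w ≤ v the allocation is EF^{+w}_{-(v-w)}. -/
open Finset

/-- `A` is an ordered partition of the item set `M` into `n` bundles. -/
def IsPartition {ι : Type*} [DecidableEq ι] {n : ℕ} (M : Finset ι)
    (A : Fin n → Finset ι) : Prop :=
  (∀ i, A i ⊆ M) ∧ (∀ i j, i ≠ j → Disjoint (A i) (A j)) ∧ (∀ g ∈ M, ∃ i, g ∈ A i)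

/-- The allocation `A` of the items `M` is EF^{+u}_{-w} for the additive valuations `v`:
for every pair of agents `i`, `j` there are `Si ⊆ M` disjoint from `A i` with `|Si| ≤ u`
and `Sj ⊆ A j` with `|Sj| ≤ w` such that `vᵢ(A i ∪ Si) ≥ vᵢ(A j \ Sj)`. -/
def EFpm {ι : Type*} [DecidableEq ι] {n : ℕ} (M : Finset ι) (v : Fin n → ι → ℝ)
    (A : Fin n → Finset ι) (u w : ℕ) : Prop :=
  ∀ i j : Fin n, ∃ Si Sj : Finset ι,
    Si ⊆ M ∧ Disjoint Si (A i) ∧ Si.card ≤ u ∧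
    Sj ⊆ A j ∧ Sj.card ≤ w ∧
    ∑ g ∈ A j \ Sj, v i g ≤ ∑ g ∈ A i ∪ Si, v i g

/-!
Suppose agent `i` stops envying agent `j ≠ i` once `S ⊆ A j` is discarded, and let `T ⊆ S`. If `i`
receives a copy of `T` and only `S \ T` is discarded, both sides of the inequality change by exactly
`vᵢ(T)`, because `T` is disjoint from `A i`. It remains to split `S` into parts of suitable sizes.
-/

theorem exists_subset_card_le_card_sdiff_le {α : Type*} [DecidableEq α] {s : Finset α} {a b : ℕ}
    (hs : s.card ≤ a + b) : ∃ t ⊆ s, t.card ≤ a ∧ (s \ t).card ≤ b := by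
  obtain ⟨t, hts, ht⟩ := exists_subset_card_eq (min_le_right a s.card)
  refine ⟨t, hts, by omega, ?_⟩
  rw [card_sdiff_of_subset hts]
  omega

theorem sum_sdiff_sdiff_le_sum_union {α N : Type*} [DecidableEq α] [AddCommMonoid N] [Preorder N]
    [AddRightMono N] {f : α → N} {s t r u : Finset α} (hus : u ⊆ s) (hur : u ⊆ r)
    (hut : Disjoint u t) (h : ∑ x ∈ s \ r, f x ≤ ∑ x ∈ t, f x) :
    ∑ x ∈ s \ (r \ u), f x ≤ ∑ x ∈ t ∪ u, f x := by
  have sdiff_disjoint_u : Disjoint (s \ r) u := disjoint_of_subset_right hur sdiff_disjoint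
  calc ∑ x ∈ s \ (r \ u), f x
      = ∑ x ∈ s \ r, f x + ∑ x ∈ u, f x := by
        rw [sdiff_sdiff_eq_sdiff_union hus, sum_union sdiff_disjoint_u]
    _ ≤ ∑ x ∈ t, f x + ∑ x ∈ u, f x := by gcongr
    _ = ∑ x ∈ t ∪ u, f x := (sum_union hut.symm).symm

theorem EFpm_zero_left_iff {ι : Type*} [DecidableEq ι] {n : ℕ} {M : Finset ι} {v : Fin n → ι → ℝ}
    {A : Fin n → Finset ι} {w : ℕ} :
    EFpm M v A 0 w ↔
      ∀ i j, ∃ S ⊆ A j, S.card ≤ w ∧ ∑ g ∈ A j \ S, v i g ≤ ∑ g ∈ A i, v i g := by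
  simp [EFpm]

theorem EFpm_zero_sub_implies_add_sub_general {ι : Type*} [DecidableEq ι] {n : ℕ}
    {M : Finset ι} {v : Fin n → ι → ℝ} {A : Fin n → Finset ι} (hAM : ∀ i, A i ⊆ M)
    (hA : ∀ i j, i ≠ j → Disjoint (A i) (A j)) {u w : ℕ} (h : EFpm M v A 0 (u + w)) :
    EFpm M v A u w := by
  intro i j
  obtain rfl | hij := eq_or_ne i j
  · exact ⟨∅, ∅, by simp⟩
  obtain ⟨S, hSA, hS, hle⟩ := EFpm_zero_left_iff.mp h i j
  obtain ⟨T, hTS, hT, hST⟩ := exists_subset_card_le_card_sdiff_le hS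
  have hTA : T ⊆ A j := hTS.trans hSA
  have hTi : Disjoint T (A i) := disjoint_of_subset_left hTA (hA j i hij.symm)
  exact ⟨T, S \ T, hTA.trans (hAM j), hTi, hT, sdiff_subset.trans hSA, hST,
    sum_sdiff_sdiff_le_sum_union hTA hTS hTi hle⟩

/-- If an allocation is EF^{+0}_{-v} then for every `0 ≤ w ≤ v` it is EF^{+w}_{-(v-w)}. -/
theorem EFpm_zero_sub_implies_add_sub {ι : Type*} [DecidableEq ι] {n : ℕ}
    (M : Finset ι) (v : Fin n → ι → ℝ) (hv : ∀ i g, 0 ≤ v i g)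
    (A : Fin n → Finset ι) (hA : IsPartition M A)
    (vv w : ℕ) (hw : w ≤ vv)
    (h : EFpm M v A 0 vv) : EFpm M v A w (vv - w) := by
  rw [← Nat.add_sub_of_le hw] at h
  exact EFpm_zero_sub_implies_add_sub_general hA.1 hA.2.1 h
end

section
/- For any two additive valuations v_1, v_2 over a finite set M of indivisible items, there exists a partition (X,Y) of M such that both allocations (A_1,A_2) = (X,Y) and (A_1,A_2) = (Y,X) are EF1. -/
open Finset

/-!
Each agent pairs off the items in decreasing order of value. If a bipartition splits all of these
pairs, the agent is EF1 with either part: after dropping one item of the first pair, each item left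
in the other part is matched with an item of the preceding pair, which is worth at least as much.
The pairings of the two agents are two matchings, and the union of two matchings is bipartite, so
some bipartition splits the pairs of both agents.
-/

open Equiv Function

section Colorings

variable {α : Type*}

/-- The two-coloring `f` separates the permutation `σ` if it is a proper coloring of the graph
joining each `x` to `σ x`. For an involution `σ` this graph is a matching, whose unmatched vertices
are the fixed points of `σ`. -/
def Separates (f : α → Bool) (σ : Perm α) : Prop :=
  ∀ x, σ x ≠ x → f (σ x) ≠ f x

theorem Separates.of_mul_right {f : α → Bool} {σ τ : Perm α} (h : Separates f (σ * τ))
    (hστ : σ.Disjoint τ) : Separates f τ := by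
  intro x hx
  have hmul : (σ * τ) x = τ x := by
    rw [hστ.commute.eq, Perm.mul_apply, (hστ x).resolve_right hx]
  simpa only [hmul] using h x (hmul ▸ hx)

theorem Separates.of_mul_left {f : α → Bool} {σ τ : Perm α} (h : Separates f (σ * τ))
    (hστ : σ.Disjoint τ) : Separates f σ :=
  Separates.of_mul_right (hστ.commute.eq ▸ h) hστ.symm

theorem exists_coloring_of_involutive {σ : α → α} (hσ : Involutive σ) (hfix : ∀ x, σ x ≠ x) :
    ∃ f : α → Bool, ∀ x, f (σ x) ≠ f x := by
  classical
  let : LinearOrder α := linearOrderOfSTO WellOrderingRel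
  refine ⟨fun x => decide (x < σ x), fun x => ?_⟩
  rcases (hfix x).lt_or_gt with h | h <;> simp [hσ x, h, h.le]

theorem semiconjBy_mul_zpow_neg {G : Type*} [Group G] {a b : G} (ha : a * a = 1) (hb : b * b = 1)
    (k : ℤ) : SemiconjBy a ((a * b) ^ k) ((a * b) ^ (-k)) := by
  have hinv : (a * b)⁻¹ = b * a := by
    rw [mul_inv_rev, inv_eq_of_mul_eq_one_left ha, inv_eq_of_mul_eq_one_left hb]
  have hconj : SemiconjBy a (a * b) (a * b)⁻¹ := by
    rw [SemiconjBy, hinv, ← mul_assoc, ha, one_mul, mul_assoc, ha, mul_one]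
  simpa only [inv_zpow'] using hconj.zpow_right k

variable {σ τ : Perm α}

/- In the dihedral group generated by `σ` and `τ`, each reflection `(σ * τ) ^ k * σ` is conjugate
to `σ` or `τ`, according to the parity of `k`, and so has no fixed point. -/
theorem not_sameCycle_mul_apply (hσ : σ * σ = 1) (hτ : τ * τ = 1) (hσ_fix : ∀ x, σ x ≠ x)
    (hτ_fix : ∀ x, τ x ≠ x) (x : α) : ¬ (σ * τ).SameCycle x (σ x) := by
  rintro ⟨k, hk⟩
  have hshift (m : ℤ) : σ (((σ * τ) ^ m) x) = ((σ * τ) ^ (-m + k)) x := by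
    rw [← Perm.mul_apply, (semiconjBy_mul_zpow_neg hσ hτ m).eq, Perm.mul_apply, ← hk,
      ← Perm.mul_apply, ← zpow_add]
  obtain ⟨m, rfl | rfl⟩ := Int.even_or_odd' k
  · apply hσ_fix (((σ * τ) ^ m) x)
    rw [hshift, two_mul, neg_add_cancel_left]
  · apply hτ_fix (((σ * τ) ^ m) x)
    have hτ_eq : τ = σ * (σ * τ) := by rw [← mul_assoc, hσ, one_mul]
    calc τ (((σ * τ) ^ m) x) = σ (((σ * τ) ^ (1 + m)) x) := by
          rw [zpow_one_add, ← Perm.mul_apply, ← Perm.mul_apply, ← mul_assoc, ← hτ_eq]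
      _ = ((σ * τ) ^ m) x := by rw [hshift]; congr 2; ring

theorem exists_coloring_of_fixedPointFree (hσ : σ * σ = 1) (hτ : τ * τ = 1)
    (hσ_fix : ∀ x, σ x ≠ x) (hτ_fix : ∀ x, τ x ≠ x) :
    ∃ f : α → Bool, (∀ x, f (σ x) ≠ f x) ∧ ∀ x, f (τ x) ≠ f x := by
  -- `σ` and `τ` induce the same fixed-point-free involution on the cycles of `σ * τ`.
  let Cycles := Quotient (Perm.SameCycle.setoid (σ * τ))
  let q : α → Cycles := Quotient.mk _
  let swapCycles : Cycles → Cycles :=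
    Quotient.map σ fun x _ ⟨k, hk⟩ => ⟨-k, by
      rw [← hk, ← Perm.mul_apply, ← Perm.mul_apply, (semiconjBy_mul_zpow_neg hσ hτ k).eq]⟩
  have hq_σ (x : α) : q (σ x) = swapCycles (q x) := rfl
  have hq_τ (x : α) : q (τ x) = swapCycles (q x) := by
    have hx : σ ((σ * τ) x) = τ x := by
      rw [← Perm.mul_apply, ← mul_assoc, hσ, one_mul]
    rw [← hx, hq_σ]
    exact congrArg swapCycles (Quotient.sound (Perm.sameCycle_apply_left.2 (.refl _ _)))
  have hswapCycles : Involutive swapCycles := by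
    rintro ⟨x⟩
    exact congrArg q (DFunLike.congr_fun hσ x)
  have hswapCycles_fix : ∀ c, swapCycles c ≠ c := by
    rintro ⟨x⟩ h
    exact not_sameCycle_mul_apply hσ hτ hσ_fix hτ_fix x (Quotient.exact h.symm)
  obtain ⟨f, hf⟩ := exists_coloring_of_involutive hswapCycles hswapCycles_fix
  exact ⟨f ∘ q, fun x => by simpa only [comp_apply, hq_σ] using hf (q x),
    fun x => by simpa only [comp_apply, hq_τ] using hf (q x)⟩

-- In two copies of `α`, each fixed point can be matched with its twin.
theorem exists_fixedPointFree_extension (hσ : σ * σ = 1) :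
    ∃ σ' : Perm (α × Bool), σ' * σ' = 1 ∧ (∀ p, σ' p ≠ p) ∧
      ∀ x, σ x ≠ x → σ' (x, false) = (σ x, false) := by
  classical
  have hσ_inv (x : α) : σ (σ x) = x := DFunLike.congr_fun hσ x
  let e : α × Bool → α × Bool := fun p => if σ p.1 = p.1 then (p.1, !p.2) else (σ p.1, p.2)
  have he : Involutive e := by
    rintro ⟨x, b⟩
    by_cases h : σ x = x
    · simp [e, h]
    · simp [e, h, hσ_inv, Ne.symm h]
  refine ⟨he.toPerm, Equiv.ext he, ?_, fun x hx => by simp [e, hx]⟩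
  rintro ⟨x, b⟩
  by_cases h : σ x = x <;> simp [e, h]

theorem exists_separates_separates (hσ : σ * σ = 1) (hτ : τ * τ = 1) :
    ∃ f : α → Bool, Separates f σ ∧ Separates f τ := by
  obtain ⟨σ', hσ', hσ'_fix, hσ'_eq⟩ := exists_fixedPointFree_extension hσ
  obtain ⟨τ', hτ', hτ'_fix, hτ'_eq⟩ := exists_fixedPointFree_extension hτ
  obtain ⟨f, hfσ, hfτ⟩ := exists_coloring_of_fixedPointFree hσ' hτ' hσ'_fix hτ'_fix
  refine ⟨fun x => f (x, false), fun x hx => ?_, fun x hx => ?_⟩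
  · simpa only [hσ'_eq x hx] using hfσ (x, false)
  · simpa only [hτ'_eq x hx] using hfτ (x, false)

end Colorings

section Envy

variable {ι R : Type*} [DecidableEq ι] [AddCommMonoid R]

/-- An agent with additive valuation `w` who holds `A` does not envy the holder of `B` once some
set of at most one item is removed from `B`. -/
def EnvyFreeUpToOne [LE R] (w : ι → R) (A B : Finset ι) : Prop :=
  ∃ S ⊆ B, #S ≤ 1 ∧ ∑ g ∈ B \ S, w g ≤ ∑ g ∈ A, w g

theorem EnvyFreeUpToOne.refl [Preorder R] (w : ι → R) (A : Finset ι) : EnvyFreeUpToOne w A A :=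
  ⟨∅, empty_subset A, by simp, by simp⟩

theorem EFpm_zero_one_iff {n : ℕ} {M : Finset ι} {v : Fin n → ι → ℝ} {A : Fin n → Finset ι} :
    EFpm M v A 0 1 ↔ ∀ i j, EnvyFreeUpToOne (v i) (A i) (A j) := by
  simp [EFpm, EnvyFreeUpToOne]

theorem EFpm_pair_zero_one_iff {M : Finset ι} {v : Fin 2 → ι → ℝ} {A B : Finset ι} :
    EFpm M v ![A, B] 0 1 ↔ EnvyFreeUpToOne (v 0) A B ∧ EnvyFreeUpToOne (v 1) B A := by
  simp [EFpm_zero_one_iff, Fin.forall_fin_two, EnvyFreeUpToOne.refl]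

theorem EnvyFreeUpToOne.of_card_le_one [PartialOrder R] [IsOrderedAddMonoid R] {w : ι → R}
    {A B : Finset ι} (hA : ∀ g ∈ A, 0 ≤ w g) (hB : #B ≤ 1) : EnvyFreeUpToOne w A B :=
  ⟨B, Subset.rfl, hB, by simpa using sum_nonneg hA⟩

theorem EnvyFreeUpToOne.insert_insert [PartialOrder R] [IsOrderedAddMonoid R] {w : ι → R}
    {A B : Finset ι} {x y : ι} (h : EnvyFreeUpToOne w A B) (hyA : y ∉ A) (hxB : x ∉ B)
    (hy : 0 ≤ w y) (hBy : ∀ g ∈ B, w g ≤ w y) :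
    EnvyFreeUpToOne w (insert y A) (insert x B) := by
  obtain ⟨S, hSB, hS, hle⟩ := h
  have hSy : ∑ g ∈ S, w g ≤ w y := by
    calc ∑ g ∈ S, w g ≤ #S • w y := sum_le_card_nsmul S w (w y) fun g hg => hBy g (hSB hg)
      _ ≤ 1 • w y := nsmul_le_nsmul_left hy hS
      _ = w y := one_nsmul _
  refine ⟨{x}, by simp, by simp, ?_⟩
  calc ∑ g ∈ insert x B \ {x}, w g = ∑ g ∈ S, w g + ∑ g ∈ B \ S, w g := by
        rw [sdiff_singleton_eq_erase, erase_insert hxB, add_comm, sum_sdiff hSB]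
    _ ≤ w y + ∑ g ∈ A, w g := add_le_add hSy hle
    _ = ∑ g ∈ insert y A, w g := (sum_insert hyA).symm

theorem envyFreeUpToOne_filter_insert_insert [PartialOrder R] [IsOrderedAddMonoid R] {w : ι → R}
    {f : ι → Bool} {x y : ι} {t : Finset ι}
    (h : EnvyFreeUpToOne w {z ∈ t | f z = !f x} {z ∈ t | f z = f x}) (hx : x ∉ t) (hy : y ∉ t)
    (hf : f y ≠ f x) (hwy : 0 ≤ w y) (hyt : ∀ z ∈ t, w z ≤ w y) :
    EnvyFreeUpToOne w {z ∈ insert x (insert y t) | f z = !f x}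
      {z ∈ insert x (insert y t) | f z = f x} := by
  have hfy : f y = !f x := Bool.eq_not.2 hf
  have hown : {z ∈ insert x (insert y t) | f z = !f x} = insert y {z ∈ t | f z = !f x} := by
    simp [filter_insert, hfy]
  have hother : {z ∈ insert x (insert y t) | f z = f x} = insert x {z ∈ t | f z = f x} := by
    simp [filter_insert, hfy]
  rw [hown, hother]
  exact h.insert_insert (by simp [hy]) (by simp [hx]) hwy fun z hz =>
    hyt z (mem_of_mem_filter z hz)

end Envy

section Pairings

variable {ι R : Type*} [DecidableEq ι] [LinearOrder R]

theorem exists_eq_insert_insert_forall_le {s : Finset ι} (w : ι → R) (hs : 1 < #s) :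
    ∃ x y t, x ≠ y ∧ x ∉ t ∧ y ∉ t ∧ s = insert x (insert y t) ∧
      (∀ z ∈ t, w z ≤ w x) ∧ ∀ z ∈ t, w z ≤ w y := by
  obtain ⟨x, hx, hx_max⟩ := exists_max_image s w (card_pos.1 (by omega))
  obtain ⟨y, hy, hy_max⟩ := exists_max_image (s.erase x) w
    (card_pos.1 (by rw [card_erase_of_mem hx]; omega))
  refine ⟨x, y, (s.erase x).erase y, (ne_of_mem_erase hy).symm, by simp, by simp,
    by rw [insert_erase hy, insert_erase hx], fun z hz => hx_max z ?_, fun z hz => hy_max z ?_⟩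
  · exact mem_of_mem_erase (mem_of_mem_erase hz)
  · exact mem_of_mem_erase hz

variable [AddCommMonoid R] [IsOrderedAddMonoid R]

theorem exists_pairing_forall_separates_envyFreeUpToOne {w : ι → R} {s : Finset ι}
    (hw : ∀ g ∈ s, 0 ≤ w g) :
    ∃ σ : Perm ι, σ * σ = 1 ∧ (∀ x ∉ s, σ x = x) ∧ ∀ f, Separates f σ →
      ∀ b, EnvyFreeUpToOne w {x ∈ s | f x = !b} {x ∈ s | f x = b} := by
  induction s using Finset.strongInduction with | H s ih
  rcases le_or_gt #s 1 with hs | hs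
  · refine ⟨1, one_mul 1, fun _ _ => rfl, fun f _ b => .of_card_le_one ?_ ?_⟩
    · exact fun g hg => hw g (mem_of_mem_filter g hg)
    · exact (card_filter_le _ _).trans hs
  obtain ⟨x, y, t, hxy, hx, hy, rfl, hxt, hyt⟩ := exists_eq_insert_insert_forall_le w hs
  obtain ⟨σ, hσ, hσt, hσf⟩ := ih t (by grind) fun g hg => hw g (by grind)
  have hdisj : (swap x y).Disjoint σ := by
    intro z
    by_cases hz : z ∈ t
    · exact .inl (swap_apply_of_ne_of_ne (by grind) (by grind))
    · exact .inr (hσt z hz)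
  refine ⟨swap x y * σ, ?_, fun z hz => ?_, fun f hf b => ?_⟩
  · rw [hdisj.commute.symm.mul_mul_mul_comm, swap_mul_self, hσ, one_mul]
  · rw [Perm.mul_apply, hσt z (by grind), swap_apply_of_ne_of_ne (by grind) (by grind)]
  · have hfyx : f y ≠ f x := by
      simpa only [swap_apply_left] using hf.of_mul_left hdisj x (by simpa using hxy.symm)
    have hft := hσf f (hf.of_mul_right hdisj) b
    obtain rfl | rfl : b = f x ∨ b = f y := Bool.eq_not.2 hfyx ▸ Bool.eq_or_eq_not b (f x)
    · exact envyFreeUpToOne_filter_insert_insert hft hx hy hfyx (hw y (by simp)) hyt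
    · rw [insert_comm]
      exact envyFreeUpToOne_filter_insert_insert hft hy hx hfyx.symm (hw x (by simp)) hxt

theorem exists_partition_both_orders_EF1_general {M : Finset ι} {v : Fin 2 → ι → R}
    (hv : ∀ i, ∀ g ∈ M, 0 ≤ v i g) :
    ∃ X ⊆ M, ∀ i, EnvyFreeUpToOne (v i) X (M \ X) ∧ EnvyFreeUpToOne (v i) (M \ X) X := by
  choose σ hσ _ hσf using fun i => exists_pairing_forall_separates_envyFreeUpToOne (hv i)
  obtain ⟨f, hf₀, hf₁⟩ := exists_separates_separates (hσ 0) (hσ 1)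
  have hf : ∀ i, Separates f (σ i) := Fin.forall_fin_two.2 ⟨hf₀, hf₁⟩
  have hcompl : M \ {x ∈ M | f x = true} = {x ∈ M | f x = false} := by grind
  refine ⟨{x ∈ M | f x = true}, filter_subset _ _, fun i => ?_⟩
  rw [hcompl]
  exact ⟨hσf i f (hf i) false, hσf i f (hf i) true⟩

end Pairings

/-- For any two additive valuations over a finite item set there is a partition `(X, Xᶜ)`
such that both `(X, Xᶜ)` and `(Xᶜ, X)` are EF1 (= EF^{+0}_{-1}) allocations. -/
theorem exists_partition_both_orders_EF1 {ι : Type*} [Fintype ι] [DecidableEq ι]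
    (v : Fin 2 → ι → ℝ) (hv : ∀ i g, 0 ≤ v i g) :
    ∃ X : Finset ι,
      EFpm Finset.univ v ![X, Xᶜ] 0 1 ∧ EFpm Finset.univ v ![Xᶜ, X] 0 1 := by
  obtain ⟨X, -, hX⟩ := exists_partition_both_orders_EF1_general (M := univ) fun i g _ => hv i g
  rw [← compl_eq_univ_sdiff] at hX
  exact ⟨X, EFpm_pair_zero_one_iff.2 ⟨(hX 0).1, (hX 1).2⟩,
    EFpm_pair_zero_one_iff.2 ⟨(hX 0).2, (hX 1).1⟩⟩
end

section
/- For three agents and any number m of items, there exists a fractional allocation rule F, mapping each profile (v_1,v_2,v_3) of additive valuations over the m items to a fractional allocation (x_{ig}) with x_{ig} ≥ 0 and ∑_{i=1}^3 x_{ig} = 1 for every item g, such that: (i) F is truthful, i.e., for every profile, every agent i, and every alternative valuation v'_i, agent i's expected utility ∑_g v_i(g)·x_{ig} under F applied to the true profile is at least her expected utility under F applied to the profile with v_i replaced by v'_i; and (ii) for every profile, the fractional allocation F(v_1,v_2,v_3) is EF^{+1}_{-1}-realizable. -/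
open Finset

/-- The fractional allocation `x` is EF^{+u}_{-w}-realizable for the valuations `v`:
it is the marginal of a finite probability distribution over EF^{+u}_{-w} allocations. -/
def Realizable {n m : ℕ} (v : Fin n → Fin m → ℝ) (u w : ℕ)
    (x : Fin n → Fin m → ℝ) : Prop :=
  ∃ (K : ℕ) (p : Fin K → ℝ) (A : Fin K → Fin n → Finset (Fin m)),
    (∀ k, 0 ≤ p k) ∧ (∑ k, p k = 1) ∧
    (∀ k, IsPartition Finset.univ (A k)) ∧
    (∀ k, EFpm Finset.univ v (A k) u w) ∧
    (∀ i g, ∑ k, (if g ∈ A k i then p k else 0) = x i g)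

/-!
The rule ignores the valuations and gives every agent a third of every item, so that it is truthful
and only a partition into three bundles good for all agents has to be found: passing its bundles
around cyclically realizes the fractional allocation.

An extreme point of the polytope of fractional bundles `t` worth a third of all items to each agent
has at most three items with `0 < t g < 1`. These can be rounded to a bundle `X` such that, for two
of the agents, the error is at most two thirds of the best item of `X` or of the best item of its
complement; for the third agent the bound is weaker. The complement of `X` is then split by
choosing one item of each pair in a list of pairs. For the third agent every choice is balanced up
to one item, if the pairs are consecutive items of her ranking. A vertex of the polytope of signs
balancing the choice for the two others has at most two non-integral coordinates, which costs them
at most two items: just what their better rounding can afford.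
-/

section LinearProgramming

open Filter Topology Module

theorem isClosed_linearMap_fiber {κ E : Type*} [Finite κ] [AddCommGroup E] [Module ℝ E]
    (f : (κ → ℝ) →ₗ[ℝ] E) (x : κ → ℝ) : IsClosed {y | f y = f x} := by
  have hker : {y | f y = f x} = (· - x) ⁻¹' (LinearMap.ker f : Set (κ → ℝ)) := by
    ext y
    simp [sub_eq_zero]
  rw [hker]
  exact (LinearMap.ker f).closed_of_finiteDimensional.preimage (continuous_sub_right x)

theorem exists_mem_ker_supported {κ E : Type*} [AddCommGroup E] [Module ℝ E]
    [Module.Finite ℝ E] (f : (κ → ℝ) →ₗ[ℝ] E) {s : Finset κ} (hs : finrank ℝ E < #s) :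
    ∃ c : κ → ℝ, c ≠ 0 ∧ f c = 0 ∧ ∀ k ∉ s, c k = 0 := by
  let e := Function.ExtendByZero.linearMap ℝ (Subtype.val : s → κ)
  have he : Function.Injective e :=
    Function.extend_injective Subtype.val_injective (0 : κ → ℝ)
  have hker : LinearMap.ker (f ∘ₗ e) ≠ ⊥ := LinearMap.ker_ne_bot_of_finrank_lt (by simpa using hs)
  obtain ⟨d, hd, hd0⟩ := Submodule.exists_mem_ne_zero_of_ne_bot hker
  exact ⟨e d, (map_ne_zero_iff e he).2 hd0, hd,
    fun k hk => Function.extend_apply' _ _ _ (by simpa using hk)⟩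

/-- An extreme point of the fiber works: with more interior coordinates, it could be moved both ways
along a kernel vector supported on them. -/
theorem exists_mem_Icc_card_interior_le {κ E : Type*} [Fintype κ] [AddCommGroup E] [Module ℝ E]
    [Module.Finite ℝ E] (f : (κ → ℝ) →ₗ[ℝ] E) {l u x : κ → ℝ} (hx : x ∈ Set.Icc l u) :
    ∃ y ∈ Set.Icc l u, f y = f x ∧ #{k | y k ≠ l k ∧ y k ≠ u k} ≤ finrank ℝ E := by
  obtain ⟨y, hy⟩ := (isCompact_Icc.inter_right
    (isClosed_linearMap_fiber f x)).extremePoints_nonempty ⟨x, hx, rfl⟩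
  obtain ⟨⟨hyIcc, hyf⟩, hext⟩ := mem_extremePoints.1 hy
  refine ⟨y, hyIcc, hyf, ?_⟩
  by_contra! hcard
  obtain ⟨c, hc0, hfc, hc⟩ := exists_mem_ker_supported f hcard
  have hnear : ∀ᶠ s : ℝ in 𝓝 0, y + s • c ∈ Set.Icc l u := by
    have hcoord (k : κ) : ∀ᶠ s : ℝ in 𝓝 0, (y + s • c) k ∈ Set.Icc (l k) (u k) := by
      by_cases hk : y k ≠ l k ∧ y k ≠ u k
      · have hcont : Tendsto (fun s : ℝ => y k + s * c k) (𝓝 0) (𝓝 (y k)) :=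
          Continuous.tendsto' (by fun_prop) _ _ (by simp)
        exact hcont.eventually
          (Icc_mem_nhds ((hyIcc.1 k).lt_of_ne' hk.1) ((hyIcc.2 k).lt_of_ne hk.2))
      · simp [hc k (by simpa using hk), hyIcc.1 k, hyIcc.2 k]
    filter_upwards [eventually_all.2 hcoord] with s hs
    exact ⟨fun k => (hs k).1, fun k => (hs k).2⟩
  have hnear' : ∀ᶠ s : ℝ in 𝓝 0, y + (-s) • c ∈ Set.Icc l u :=
    (continuous_neg.tendsto' 0 0 neg_zero).eventually hnear
  obtain ⟨s, ⟨hpos, hneg⟩, hs0⟩ :=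
    (((hnear.and hnear').filter_mono nhdsWithin_le_nhds).and
      (self_mem_nhdsWithin : {(0 : ℝ)}ᶜ ∈ 𝓝[≠] 0)).exists
  have hmid : y ∈ openSegment ℝ (y + s • c) (y + (-s) • c) :=
    ⟨1 / 2, 1 / 2, by norm_num, by norm_num, by norm_num, by module⟩
  have hfiber (r : ℝ) : f (y + r • c) = f x := by
    rw [map_add, map_smul, hfc, smul_zero, add_zero, hyf]
  have hstay : y + s • c = y := (hext _ ⟨hpos, hfiber s⟩ _ ⟨hneg, hfiber (-s)⟩ hmid).1
  exact (smul_ne_zero hs0 hc0) (add_eq_left.1 hstay)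

theorem exists_mem_Icc_sum_mul_eq_card_interior_le {κ J : Type*} [Fintype J] (s : Finset κ)
    (w : J → κ → ℝ) {l u x : κ → ℝ} (hx : x ∈ Set.Icc l u) :
    ∃ y ∈ Set.Icc l u, (∀ j, ∑ k ∈ s, y k * w j k = ∑ k ∈ s, x k * w j k) ∧
      #{k ∈ s | y k ≠ l k ∧ y k ≠ u k} ≤ Fintype.card J := by
  classical
  obtain ⟨y, hy, hyx, hcard⟩ := exists_mem_Icc_card_interior_le
    (Matrix.mulVecLin fun j (k : s) => w j k) (l := fun k => l k) (u := fun k => u k)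
    (x := fun k => x k) ⟨fun k => hx.1 k, fun k => hx.2 k⟩
  let y' : κ → ℝ := fun k => if hk : k ∈ s then y ⟨k, hk⟩ else x k
  have hy' (k : s) : y' k = y k := by simp [y']
  have hyIcc (k : κ) : y' k ∈ Set.Icc (l k) (u k) := by
    by_cases hk : k ∈ s
    · exact hy' ⟨k, hk⟩ ▸ ⟨hy.1 ⟨k, hk⟩, hy.2 ⟨k, hk⟩⟩
    · simpa only [y', hk, dite_false] using ⟨hx.1 k, hx.2 k⟩
  refine ⟨y', ⟨fun k => (hyIcc k).1, fun k => (hyIcc k).2⟩, fun j => ?_, ?_⟩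
  · rw [← sum_coe_sort, ← sum_coe_sort s]
    have hj : (fun k : s => w j k) ⬝ᵥ y = (fun k : s => w j k) ⬝ᵥ (fun k => x k) :=
      congrFun hyx j
    simpa only [dotProduct, hy', mul_comm] using hj
  · calc #{k ∈ s | y' k ≠ l k ∧ y' k ≠ u k}
      _ ≤ #(image Subtype.val {k : s | y k ≠ l k ∧ y k ≠ u k}) :=
          card_le_card fun k hk => by
            obtain ⟨hks, hk'⟩ := mem_filter.1 hk
            exact mem_image.2 ⟨⟨k, hks⟩, by simpa [← hy'] using hk', rfl⟩
      _ ≤ Fintype.card J := card_image_le.trans (by simpa using hcard)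

end LinearProgramming

section LargestValues

variable {ι : Type*} {v : ι → ℝ} {S T : Finset ι}

/-- The largest value under `v` of an item of `S`, which is `0` if there is no item: this is how
much one item of `S` can contribute to the envy of an agent with valuation `v`. -/
def maxValue (v : ι → ℝ) (S : Finset ι) : ℝ := S.fold max 0 v

theorem maxValue_nonneg : 0 ≤ maxValue v S := le_fold_max 0 |>.2 (Or.inl le_rfl)

theorem le_maxValue {g : ι} (hg : g ∈ S) : v g ≤ maxValue v S :=
  (le_fold_max (v g)).2 (Or.inr ⟨g, hg, le_rfl⟩)

theorem maxValue_le {c : ℝ} (hc : 0 ≤ c) (h : ∀ g ∈ S, v g ≤ c) : maxValue v S ≤ c :=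
  (fold_max_le c).2 ⟨hc, h⟩

theorem maxValue_mono (h : S ⊆ T) : maxValue v S ≤ maxValue v T :=
  maxValue_le maxValue_nonneg fun _ hg => le_maxValue (h hg)

theorem exists_mem_eq_maxValue (hv : ∀ g, 0 ≤ v g) (hS : S.Nonempty) :
    ∃ g ∈ S, v g = maxValue v S := by
  obtain ⟨g, hg, hmax⟩ := S.exists_max_image v hS
  exact ⟨g, hg, (le_maxValue hg).antisymm (maxValue_le (hv g) hmax)⟩

theorem sum_le_maxValue_of_card_le_one (hS : #S ≤ 1) : ∑ g ∈ S, v g ≤ maxValue v S := by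
  obtain hS0 | hS1 := Nat.le_one_iff_eq_zero_or_eq_one.1 hS
  · rw [card_eq_zero.1 hS0, sum_empty]
    exact maxValue_nonneg
  · obtain ⟨g, rfl⟩ := card_eq_one.1 hS1
    rw [sum_singleton]
    exact le_maxValue (mem_singleton_self g)

theorem sum_mul_le_mul_maxValue {w : ι → ℝ} {c : ℝ} (hw : ∀ g ∈ S, 0 ≤ w g)
    (hc : ∑ g ∈ S, w g ≤ c) : ∑ g ∈ S, w g * v g ≤ c * maxValue v S :=
  calc ∑ g ∈ S, w g * v g ≤ ∑ g ∈ S, w g * maxValue v S :=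
        sum_le_sum fun g hg => mul_le_mul_of_nonneg_left (le_maxValue hg) (hw g hg)
    _ = (∑ g ∈ S, w g) * maxValue v S := (sum_mul ..).symm
    _ ≤ c * maxValue v S := mul_le_mul_of_nonneg_right hc maxValue_nonneg

/-- The second-largest value under `v` of an item of `S`, counted with multiplicity; it is `0` if
`S` has fewer than two items. -/
def secondValue (v : ι → ℝ) (S : Finset ι) : ℝ :=
  maxValue (fun p : ι × ι => min (v p.1) (v p.2)) S.offDiag

theorem secondValue_nonneg : 0 ≤ secondValue v S := maxValue_nonneg

theorem secondValue_mono (h : S ⊆ T) : secondValue v S ≤ secondValue v T :=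
  maxValue_mono (offDiag_mono h)

theorem secondValue_le {c : ℝ} (hc : 0 ≤ c)
    (h : ∀ g ∈ S, ∀ g' ∈ S, g ≠ g' → min (v g) (v g') ≤ c) : secondValue v S ≤ c :=
  maxValue_le hc fun p hp => by
    obtain ⟨hg, hg', hne⟩ := mem_offDiag.1 hp
    exact h _ hg _ hg' hne

theorem le_secondValue {g g' : ι} (hg : g ∈ S) (hg' : g' ∈ S) (hne : g' ≠ g) (h : v g ≤ v g') :
    v g ≤ secondValue v S := by
  have hmin : min (v g) (v g') = v g := min_eq_left h
  exact hmin.symm.trans_le (le_maxValue (v := fun p : ι × ι => min (v p.1) (v p.2))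
    (mem_offDiag.2 ⟨hg, hg', hne.symm⟩ : (g, g') ∈ S.offDiag))

end LargestValues

section Rounding

variable {ι : Type*} {v t : ι → ℝ} {U D : Finset ι}

/-- The change of the value `∑ g, t g * v g` of a fractional bundle `t` when the items of `U` are
rounded up to `1` and those of `D` are rounded down to `0`. -/
def roundingError (v t : ι → ℝ) (U D : Finset ι) : ℝ :=
  ∑ g ∈ U, (1 - t g) * v g - ∑ g ∈ D, t g * v g

/-- Rounding `U` up and `D` down adds at most two thirds of an item of `U` to the value of `t`, and
takes away at most two thirds of an item of `D`. -/
structure TightRounding (v t : ι → ℝ) (U D : Finset ι) : Prop where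
  upper : 3 * roundingError v t U D ≤ 2 * maxValue v U
  lower : -(3 * roundingError v t U D) ≤ 2 * maxValue v D

/-- The weaker guarantee given to one distinguished agent: rounding adds at most a full item of
`U`, and the loss may exceed two thirds of the best item of `D` by a third of the second best. -/
structure LooseRounding (v t : ι → ℝ) (U D : Finset ι) : Prop where
  upper : roundingError v t U D ≤ maxValue v U
  lower : -(3 * roundingError v t U D) ≤ 2 * maxValue v D + secondValue v D

theorem TightRounding.loose (h : TightRounding v t U D) : LooseRounding v t U D where
  upper := by linarith [h.upper, maxValue_nonneg (v := v) (S := U)]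
  lower := by linarith [h.lower, secondValue_nonneg (v := v) (S := D)]

theorem roundingError_one_sub :
    roundingError v (fun g => 1 - t g) D U = -roundingError v t U D := by
  simp only [roundingError, sub_sub_cancel, neg_sub]

theorem TightRounding.of_one_sub (h : TightRounding v (fun g => 1 - t g) D U) :
    TightRounding v t U D where
  upper := by simpa only [roundingError_one_sub, mul_neg, neg_neg] using h.lower
  lower := by simpa only [roundingError_one_sub, mul_neg] using h.upper

section Bounds

variable (hv : ∀ g, 0 ≤ v g)
include hv

theorem neg_roundingError_singleton_add_le [DecidableEq ι] {x y z : ι} (hxz : x ≠ z) (hyz : y ≠ z)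
    (htx : t x ≤ 2 / 3) (hty : t y ≤ 2 / 3) (htz : t z ≤ 2 / 3) (hxy1 : t x + t y ≤ 1)
    (hxz1 : t x + t z ≤ 1) (hyz1 : t y + t z ≤ 1) :
    -(3 * (roundingError v t {x} {y, z} + roundingError v t {y} {x, z})) ≤
      2 * maxValue v {y, z} + 2 * maxValue v {x, z} := by
  have hy : v y ≤ maxValue v {y, z} := le_maxValue (by simp)
  have hz : v z ≤ maxValue v {y, z} := le_maxValue (by simp)
  have hx : v x ≤ maxValue v {x, z} := le_maxValue (by simp)
  have hz' : v z ≤ maxValue v {x, z} := le_maxValue (by simp)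
  have hsum : roundingError v t {x} {y, z} + roundingError v t {y} {x, z} =
      (1 - 2 * t x) * v x + (1 - 2 * t y) * v y - 2 * t z * v z := by
    simp only [roundingError, sum_singleton, sum_pair hxz, sum_pair hyz]
    ring
  rw [hsum]
  obtain hx2 | hx2 := le_total (t x) (1 / 2)
  · obtain hy2 | hy2 := le_total (t y) (1 / 2)
    · nlinarith [mul_nonneg (sub_nonneg.2 hx2) (hv x), mul_nonneg (sub_nonneg.2 hy2) (hv y),
        mul_nonneg (sub_nonneg.2 htz) (hv z)]
    · nlinarith [mul_nonneg (sub_nonneg.2 hx2) (hv x), mul_nonneg (sub_nonneg.2 hty) (hv y),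
        mul_nonneg (show 0 ≤ 1 / 2 - t z by linarith) (hv z)]
  · nlinarith [mul_nonneg (sub_nonneg.2 htx) (hv x),
      mul_nonneg (show 0 ≤ 1 / 2 - t y by linarith) (hv y),
      mul_nonneg (show 0 ≤ 1 / 2 - t z by linarith) (hv z)]

variable (ht : ∀ g, t g ∈ Set.Icc 0 1)
include ht

theorem roundingError_le {c : ℝ} (hU : ∑ g ∈ U, (1 - t g) ≤ c) :
    roundingError v t U D ≤ c * maxValue v U := by
  have hD : 0 ≤ ∑ g ∈ D, t g * v g := sum_nonneg fun g _ => mul_nonneg (ht g).1 (hv g)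
  have hUsum := sum_mul_le_mul_maxValue (v := v) (fun g _ => sub_nonneg.2 (ht g).2) hU
  exact (sub_le_self _ hD).trans hUsum

theorem neg_roundingError_le_sum : -roundingError v t U D ≤ ∑ g ∈ D, t g * v g := by
  rw [roundingError, neg_sub]
  exact sub_le_self _ (sum_nonneg fun g _ => mul_nonneg (sub_nonneg.2 (ht g).2) (hv g))

theorem neg_roundingError_le {c : ℝ} (hD : ∑ g ∈ D, t g ≤ c) :
    -roundingError v t U D ≤ c * maxValue v D :=
  (neg_roundingError_le_sum hv ht).trans (sum_mul_le_mul_maxValue (fun g _ => (ht g).1) hD)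

theorem tightRounding_of_sum_le (hU : ∑ g ∈ U, (1 - t g) ≤ 2 / 3)
    (hD : ∑ g ∈ D, t g ≤ 2 / 3) : TightRounding v t U D where
  upper := by linarith [roundingError_le hv ht hU (D := D)]
  lower := by linarith [neg_roundingError_le hv ht hD (U := U)]

theorem looseRounding_of_sum_le (hU : ∑ g ∈ U, (1 - t g) ≤ 1) (hD : ∑ g ∈ D, t g ≤ 1)
    (hD' : ∀ g ∈ D, t g ≤ 2 / 3) : LooseRounding v t U D where
  upper := by linarith [roundingError_le hv ht hU (D := D)]
  lower := by
    classical
    have hsum := neg_roundingError_le_sum hv ht (U := U) (D := D)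
    suffices h : 3 * ∑ g ∈ D, t g * v g ≤ 2 * maxValue v D + secondValue v D by linarith
    obtain rfl | hne := D.eq_empty_or_nonempty
    · simpa using add_nonneg (mul_nonneg zero_le_two maxValue_nonneg) secondValue_nonneg
    obtain ⟨a, ha, hmax⟩ := exists_mem_eq_maxValue hv hne
    have hsecond : maxValue v (D.erase a) ≤ secondValue v D :=
      maxValue_le secondValue_nonneg fun g hg => le_secondValue (mem_of_mem_erase hg) ha
        (ne_of_mem_erase hg).symm ((le_maxValue (mem_of_mem_erase hg)).trans_eq hmax.symm)
    have hrest : ∑ g ∈ D.erase a, t g * v g ≤ (1 - t a) * maxValue v (D.erase a) :=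
      sum_mul_le_mul_maxValue (fun g _ => (ht g).1) (by rw [sum_erase_eq_sub ha]; linarith)
    have hle : maxValue v (D.erase a) ≤ v a := hmax ▸ maxValue_mono (erase_subset a D)
    rw [← sum_erase_add _ _ ha, ← hmax]
    nlinarith [hD' a ha]

variable [DecidableEq ι]

/-- The two errors differ by `v b`, so an agent for whom rounding `b` down loses too much does not
gain too much when `b` is rounded up instead. -/
theorem tightRounding_insert_or {b : ι} (hbU : b ∉ U) (hbD : b ∉ D)
    (hU : ∑ g ∈ U, (1 - t g) ≤ 2 / 3) (hD : ∑ g ∈ D, t g ≤ 2 / 3) :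
    TightRounding v t U (insert b D) ∨ TightRounding v t (insert b U) D := by
  have hdiff : roundingError v t (insert b U) D = roundingError v t U (insert b D) + v b := by
    simp only [roundingError, sum_insert hbU, sum_insert hbD]
    ring
  have hdown := roundingError_le hv ht hU (D := insert b D)
  have hup := neg_roundingError_le hv ht hD (U := insert b U)
  by_cases h : -(3 * roundingError v t U (insert b D)) ≤ 2 * maxValue v (insert b D)
  · exact .inl ⟨by linarith, h⟩
  · have hbmaxD : v b ≤ maxValue v (insert b D) := le_maxValue (mem_insert_self b D)
    have hbmaxU : v b ≤ maxValue v (insert b U) := le_maxValue (mem_insert_self b U)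
    exact .inr ⟨by linarith [hv b], by linarith⟩

theorem tightRounding_insert_empty {z : ι} (hz : z ∉ U)
    (h : ¬ -(3 * roundingError v t U {z}) ≤ 2 * v z) : TightRounding v t (insert z U) ∅ := by
  have hdiff : roundingError v t (insert z U) ∅ = roundingError v t U {z} + v z := by
    simp only [roundingError, sum_insert hz, sum_singleton, sum_empty]
    ring
  have hzmax : v z ≤ maxValue v (insert z U) := le_maxValue (mem_insert_self z U)
  have hlow : -roundingError v t (insert z U) ∅ ≤ 0 * maxValue v ∅ :=
    neg_roundingError_le hv ht (by simp)
  exact ⟨by linarith [hv z], by linarith [maxValue_nonneg (v := v) (S := ∅)]⟩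

theorem roundingError_singleton_le_of_le {x y z : ι} (hxz : x ≠ z) (hxy : 1 / 3 ≤ t x + t y)
    (h : v y ≤ v x) : 3 * roundingError v t {y} {x, z} ≤ 2 * v y := by
  have hx : t x * v y ≤ t x * v x := mul_le_mul_of_nonneg_left h (ht x).1
  have hy : 1 / 3 * v y ≤ (t x + t y) * v y := mul_le_mul_of_nonneg_right hxy (hv y)
  have hz : 0 ≤ t z * v z := mul_nonneg (ht z).1 (hv z)
  rw [roundingError, sum_singleton, sum_pair hxz]
  linarith

theorem tightRounding_singleton_or {x y z : ι} (hxz : x ≠ z) (hyz : y ≠ z)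
    (htx : t x ≤ 2 / 3) (hty : t y ≤ 2 / 3) (htz : t z ≤ 2 / 3)
    (hxy : 1 / 3 ≤ t x + t y) (hxy1 : t x + t y ≤ 1) (hxz1 : t x + t z ≤ 1)
    (hyz1 : t y + t z ≤ 1) :
    TightRounding v t {x} {y, z} ∨ TightRounding v t {y} {x, z} := by
  have hdiff : roundingError v t {x} {y, z} - roundingError v t {y} {x, z} = v x - v y := by
    simp only [roundingError, sum_singleton, sum_pair hxz, sum_pair hyz]
    ring
  have hsum := neg_roundingError_singleton_add_le hv hxz hyz htx hty htz hxy1 hxz1 hyz1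
  have hxx : v x ≤ maxValue v {x} := le_maxValue (mem_singleton_self x)
  have hyy : v y ≤ maxValue v {y} := le_maxValue (mem_singleton_self y)
  have hx : v x ≤ maxValue v {x, z} := le_maxValue (mem_insert_self x {z})
  have hy : v y ≤ maxValue v {y, z} := le_maxValue (mem_insert_self y {z})
  wlog h : v y ≤ v x generalizing x y
  · exact (this hyz hxz hty htx (by linarith) (by linarith) hyz1 hxz1 (by linarith) (by linarith)
      hyy hxx hy hx (le_of_not_ge h)).symm
  have hupper := roundingError_singleton_le_of_le hv ht hxz hxy h
  by_cases hlower : -(3 * roundingError v t {y} {x, z}) ≤ 2 * maxValue v {x, z}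
  · exact .inr ⟨by linarith, hlower⟩
  · exact .inl ⟨by linarith [hv x, hv y], by linarith⟩

end Bounds

end Rounding

section ThreeItems

theorem exists_mem_forall_ne {ι : Type*} {P : Fin 3 → ι → Prop} {T : Finset ι} (hT : 2 < #T)
    (hP : ∀ j, ∀ x ∈ T, ∀ y ∈ T, x ≠ y → P j x ∨ P j y) (i : Fin 3) :
    ∃ g ∈ T, ∀ j ≠ i, P j g := by
  by_contra! hbad
  choose! f hfi hf using hbad
  obtain ⟨x, hx, y, hy, hxy, hfxy⟩ := exists_ne_map_eq_of_card_lt_of_maps_to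
    (t := univ.erase i) (f := f) (by simpa using hT) fun g hg => by simpa using hfi g hg
  exact (hP (f x) x hx y hy hxy).elim (hf x hx) (hfxy ▸ hf y hy)

theorem exists_forall_ne_or {P Q : Fin 3 → Prop} (h : ∀ j, P j ∨ Q j) :
    (∃ i, ∀ j ≠ i, P j) ∨ ∃ i, ∀ j ≠ i, Q j := by
  by_contra! hbad
  obtain ⟨j, -, hj⟩ := hbad.1 0
  obtain ⟨k, hkj, hk⟩ := hbad.1 j
  obtain ⟨l, -, hl⟩ := hbad.2 0
  obtain ⟨l', hll', hl'⟩ := hbad.2 l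
  grind

variable {ι : Type*} [DecidableEq ι]

/-- The items of `T` can be rounded to `0` or `1` so that the rounding is tight for all agents but
at most one, for whom it is loose. -/
def RoundsWell (v : Fin 3 → ι → ℝ) (t : ι → ℝ) (T : Finset ι) : Prop :=
  ∃ U D, Disjoint U D ∧ U ∪ D = T ∧
    ∃ i, LooseRounding (v i) t U D ∧ ∀ j ≠ i, TightRounding (v j) t U D

theorem RoundsWell.of_tight {v : Fin 3 → ι → ℝ} {t : ι → ℝ} {T U D : Finset ι}
    (hdisj : Disjoint U D) (hUD : U ∪ D = T) (h : ∀ j, TightRounding (v j) t U D) :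
    RoundsWell v t T :=
  ⟨U, D, hdisj, hUD, 0, (h 0).loose, fun j _ => h j⟩

variable {v : Fin 3 → ι → ℝ} {t : ι → ℝ} {T : Finset ι}
  (hv : ∀ j g, 0 ≤ v j g) (ht : ∀ g, t g ∈ Set.Icc 0 1)
include hv ht

theorem RoundsWell.of_sum_le {U D : Finset ι} (hdisj : Disjoint U D) (hUD : U ∪ D = T)
    (hU : ∑ g ∈ U, (1 - t g) ≤ 2 / 3) (hD : ∑ g ∈ D, t g ≤ 2 / 3) : RoundsWell v t T :=
  .of_tight hdisj hUD fun j => tightRounding_of_sum_le (hv j) ht hU hD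

theorem tightRounding_singleton_erase_or (hT : #T = 3) (hT' : ∀ g ∈ T, t g ≤ 2 / 3)
    (hsum : ∀ g ∈ T, ∑ g' ∈ T.erase g, t g' ∈ Set.Icc (1 / 3) 1) (j : Fin 3) {x y : ι}
    (hx : x ∈ T) (hy : y ∈ T) (hxy : x ≠ y) :
    TightRounding (v j) t {x} (T.erase x) ∨ TightRounding (v j) t {y} (T.erase y) := by
  have hyx : y ∈ T.erase x := mem_erase.2 ⟨hxy.symm, hy⟩
  obtain ⟨z, hz⟩ : ∃ z, (T.erase x).erase y = {z} := by
    rw [← card_eq_one, card_erase_of_mem hyx, card_erase_of_mem hx, hT]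
  have hTx : T.erase x = {y, z} := by rw [← hz, insert_erase hyx]
  have hT3 : T = {x, y, z} := by rw [← hTx, insert_erase hx]
  obtain ⟨hzy, hzx, hzT⟩ : z ≠ y ∧ z ≠ x ∧ z ∈ T := by
    simpa only [mem_erase] using hz.ge (mem_singleton_self z)
  have hTy : T.erase y = {x, z} := by
    rw [hT3, insert_comm, erase_insert (by simp [hxy.symm, hzy.symm])]
  have hTz : T.erase z = {x, y} := by
    rw [hT3, pair_comm y z, insert_comm, erase_insert (by simp [hzx, hzy])]
  have hsx := hTx ▸ hsum x hx
  have hsy := hTy ▸ hsum y hy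
  have hsz := hTz ▸ hsum z hzT
  rw [sum_pair hzy.symm] at hsx
  rw [sum_pair hzx.symm] at hsy
  rw [sum_pair hxy] at hsz
  rw [hTx, hTy]
  exact tightRounding_singleton_or (hv j) ht hzx.symm hzy.symm (hT' x hx) (hT' y hy) (hT' z hzT)
    hsz.1 hsz.2 hsy.2 hsx.2

theorem RoundsWell.of_sum_erase_le_one (hT : #T = 3) (hT' : ∀ g ∈ T, t g ≤ 2 / 3)
    (hsum : ∀ g ∈ T, ∑ g' ∈ T.erase g, t g' ∈ Set.Icc (1 / 3) 1) : RoundsWell v t T := by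
  obtain ⟨g, hg, htight⟩ := exists_mem_forall_ne (by simp [hT])
    (fun j x hx y hy hxy => tightRounding_singleton_erase_or hv ht hT hT' hsum j hx hy hxy) 0
  refine ⟨{g}, T.erase g, by simp, by rw [singleton_union, insert_erase hg], 0, ?_, htight⟩
  exact looseRounding_of_sum_le (hv 0) ht (by simpa using (ht g).1) (hsum g hg).2
    fun g' hg' => hT' g' (mem_of_mem_erase hg')

/-- If some agent can afford any one of the items to be rounded down, the two others can agree on
such an item. If nobody can, rounding all three items up is tight for everybody. -/
theorem RoundsWell.of_one_le_sum_erase (hT : #T = 3) (hT' : ∀ g ∈ T, 1 / 3 ≤ t g)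
    (hsum : ∀ g ∈ T, ∑ g' ∈ T.erase g, t g' ∈ Set.Icc 1 (5 / 3)) : RoundsWell v t T := by
  have hsum' (g : ι) (hg : g ∈ T) : ∑ g' ∈ T.erase g, (1 - t g') ∈ Set.Icc (1 / 3 : ℝ) 1 := by
    rw [sum_sub_distrib, sum_const, card_erase_of_mem hg, hT]
    constructor <;> norm_num <;> linarith [(hsum g hg).1, (hsum g hg).2]
  by_cases hi : ∃ i, ∀ z ∈ T, -(3 * roundingError (v i) t (T.erase z) {z}) ≤ 2 * v i z
  · obtain ⟨i, hi⟩ := hi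
    obtain ⟨g, hg, htight⟩ := exists_mem_forall_ne (by simp [hT])
      (fun j x hx y hy hxy => tightRounding_singleton_erase_or hv
        (fun g => Set.Icc.mem_iff_one_sub_mem.1 (ht g)) hT
        (fun g hg => by linarith [hT' g hg]) hsum' j hx hy hxy) i
    refine ⟨T.erase g, {g}, by simp, ?_, i, ⟨?_, ?_⟩, fun j hj => (htight j hj).of_one_sub⟩
    · rw [union_comm, singleton_union, insert_erase hg]
    · simpa using roundingError_le (hv i) ht (hsum' g hg).2
    · linarith [hi g hg, le_maxValue (v := v i) (mem_singleton_self g),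
        secondValue_nonneg (v := v i) (S := {g})]
  · push Not at hi
    refine .of_tight (disjoint_empty_right T) (union_empty T) fun j => ?_
    obtain ⟨z, hz, hlt⟩ := hi j
    simpa only [insert_erase hz] using
      tightRounding_insert_empty (hv j) ht (notMem_erase z T) (not_le.2 hlt)

theorem RoundsWell.of_middle {a b c : ι} (hab : a ≠ b) (hac : a ≠ c) (hbc : b ≠ c)
    (ha : 1 / 3 ≤ t a) (hb : t b ≤ 2 / 3) (hc : t c ≤ 2 / 3) (hab1 : 1 ≤ t a + t b)
    (hbc1 : t b + t c ≤ 1) : RoundsWell v t {a, b, c} := by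
  have hor (j : Fin 3) :
      TightRounding (v j) t {a} {b, c} ∨ TightRounding (v j) t {a, b} {c} := by
    rw [pair_comm a b]
    exact tightRounding_insert_or (hv j) ht (by simpa using hab.symm) (by simpa using hbc)
      (by rw [sum_singleton]; linarith) (by rwa [sum_singleton])
  have hlow (j : Fin 3) : LooseRounding (v j) t {a} {b, c} :=
    looseRounding_of_sum_le (hv j) ht (by rw [sum_singleton]; linarith)
      (by rwa [sum_pair hbc]) (by simpa using ⟨hb, hc⟩)
  have hhigh (j : Fin 3) : LooseRounding (v j) t {a, b} {c} :=
    looseRounding_of_sum_le (hv j) ht (by rw [sum_pair hab]; linarith)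
      (by rw [sum_singleton]; linarith) (by simpa using hc)
  obtain ⟨i, hi⟩ | ⟨i, hi⟩ := exists_forall_ne_or hor
  · exact ⟨{a}, {b, c}, by simp [hab, hac], rfl, i, hlow i, hi⟩
  · exact ⟨{a, b}, {c}, by simp [hac.symm, hbc.symm], by simp [insert_union], i, hhigh i, hi⟩

omit hv ht in
theorem exists_eq_triple_antitone (t : ι → ℝ) (hT : #T = 3) :
    ∃ a b c, T = {a, b, c} ∧ a ≠ b ∧ a ≠ c ∧ b ≠ c ∧ t b ≤ t a ∧ t c ≤ t b := by
  obtain ⟨a, ha, hmax⟩ := T.exists_max_image t (card_pos.1 (by omega))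
  obtain ⟨b, c, hbc, hrest⟩ := card_eq_two.1 ((card_erase_of_mem ha).trans (by rw [hT]))
  wlog hle : t c ≤ t b generalizing b c
  · exact this c b hbc.symm (by rw [hrest, pair_comm]) (le_of_not_ge hle)
  have hb : b ∈ T.erase a := by simp [hrest]
  have hc : c ∈ T.erase a := by simp [hrest]
  exact ⟨a, b, c, by rw [← hrest, insert_erase ha], (ne_of_mem_erase hb).symm,
    (ne_of_mem_erase hc).symm, hbc, hmax b (mem_of_mem_erase hb), hle⟩

theorem RoundsWell.of_antitone_triple_of_lt {a b c : ι} (hab : a ≠ b) (hac : a ≠ c) (hbc : b ≠ c)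
    (htab : t b ≤ t a) (htbc : t c ≤ t b) (hnone : 2 / 3 < t a + t b + t c)
    (hone : t b + t c ≤ 2 / 3 → t a < 1 / 3) (htwo : t c ≤ 2 / 3 → t a + t b < 4 / 3)
    (hall : t a + t b + t c < 7 / 3) : RoundsWell v t {a, b, c} := by
  have hcard : #{a, b, c} = 3 := card_eq_three.2 ⟨a, b, c, hab, hac, hbc, rfl⟩
  have herase (g : ι) (hg : g ∈ ({a, b, c} : Finset ι)) :
      ∑ g' ∈ ({a, b, c} : Finset ι).erase g, t g' = t a + t b + t c - t g := by
    rw [sum_erase_eq_sub hg, sum_insert (by simp [hab, hac]), sum_pair hbc, add_assoc]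
  have hforall {p : ι → Prop} (ha : p a) (hb : p b) (hc : p c) :
      ∀ g ∈ ({a, b, c} : Finset ι), p g := by simp [ha, hb, hc]
  obtain hsmall | hlarge := le_total (t a + t b) 1
  · have ha : t a ≤ 2 / 3 := by
      by_contra! hlt
      linarith [hone (by linarith)]
    have hbc1 : 1 / 3 ≤ t b + t c := by
      by_contra! hlt
      linarith [hone (by linarith)]
    refine .of_sum_erase_le_one hv ht hcard
      (hforall ha (by linarith) (by linarith)) fun g hg => herase g hg ▸ ?_
    exact hforall (p := fun g => t a + t b + t c - t g ∈ Set.Icc (1 / 3) 1)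
      ⟨by linarith, by linarith⟩ ⟨by linarith, by linarith⟩ ⟨by linarith, by linarith⟩ g hg
  obtain hlarge' | hmid := le_total 1 (t b + t c)
  · have hc : 1 / 3 ≤ t c := by
      by_contra! hlt
      linarith [htwo (by linarith)]
    have hab1 : t a + t b ≤ 5 / 3 := by
      by_contra! hlt
      linarith [htwo (by linarith)]
    refine .of_one_le_sum_erase hv ht hcard
      (hforall (by linarith) (by linarith) hc) fun g hg => herase g hg ▸ ?_
    exact hforall (p := fun g => t a + t b + t c - t g ∈ Set.Icc 1 (5 / 3))
      ⟨by linarith, by linarith⟩ ⟨by linarith, by linarith⟩ ⟨by linarith, by linarith⟩ g hg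
  · have hc : t c ≤ 2 / 3 := by linarith
    exact .of_middle hv ht hab hac hbc (by linarith) (by linarith [htwo hc]) hc hlarge hmid

theorem RoundsWell.of_card_eq_three (hT : #T = 3) : RoundsWell v t T := by
  obtain ⟨a, b, c, rfl, hab, hac, hbc, htab, htbc⟩ := exists_eq_triple_antitone t hT
  have hsum : ∑ g ∈ {a, b, c}, t g = t a + t b + t c := by
    rw [sum_insert (by simp [hab, hac]), sum_pair hbc, add_assoc]
  by_cases hnone : t a + t b + t c ≤ 2 / 3
  · exact .of_sum_le hv ht (disjoint_empty_left _) (empty_union _) (by norm_num)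
      (hsum.trans_le hnone)
  by_cases hone : t b + t c ≤ 2 / 3 ∧ 1 / 3 ≤ t a
  · exact .of_sum_le hv ht (U := {a}) (D := {b, c}) (by simp [hab, hac]) rfl
      (by rw [sum_singleton]; linarith) (by rw [sum_pair hbc]; linarith)
  by_cases htwo : t c ≤ 2 / 3 ∧ 4 / 3 ≤ t a + t b
  · exact .of_sum_le hv ht (U := {a, b}) (D := {c}) (by simp [hac.symm, hbc.symm])
      (by simp [insert_union]) (by rw [sum_pair hab]; linarith) (by rw [sum_singleton]; linarith)
  by_cases hall : 7 / 3 ≤ t a + t b + t c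
  · refine .of_sum_le hv ht (disjoint_empty_right _) (union_empty _) ?_ (by norm_num)
    rw [sum_sub_distrib, hsum, sum_const, hT, nsmul_one, Nat.cast_ofNat]
    linarith
  push Not at hnone hone htwo hall
  exact .of_antitone_triple_of_lt hv ht hab hac hbc htab htbc hnone hone htwo hall

end ThreeItems

section FractionalBundle

variable {ι : Type*} {v t : ι → ℝ} {U D U' D' : Finset ι}

theorem roundingError_eq_of_subset (hU : U ⊆ U') (hD : D ⊆ D') (hU1 : ∀ g ∈ U', g ∉ U → t g = 1)
    (hD0 : ∀ g ∈ D', g ∉ D → t g = 0) : roundingError v t U' D' = roundingError v t U D := by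
  rw [roundingError, roundingError, sum_subset hU fun g hg hgU => by simp [hU1 g hg hgU],
    sum_subset hD fun g hg hgD => by simp [hD0 g hg hgD]]

theorem TightRounding.of_subset (h : TightRounding v t U D) (hU : U ⊆ U') (hD : D ⊆ D')
    (herr : roundingError v t U' D' = roundingError v t U D) : TightRounding v t U' D' where
  upper := by linarith [h.upper, maxValue_mono (v := v) hU]
  lower := by linarith [h.lower, maxValue_mono (v := v) hD]

theorem LooseRounding.of_subset (h : LooseRounding v t U D) (hU : U ⊆ U') (hD : D ⊆ D')
    (herr : roundingError v t U' D' = roundingError v t U D) : LooseRounding v t U' D' where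
  upper := by linarith [h.upper, maxValue_mono (v := v) hU]
  lower := by linarith [h.lower, maxValue_mono (v := v) hD, secondValue_mono (v := v) hD]

variable [Fintype ι] [DecidableEq ι]

theorem roundingError_compl (X : Finset ι) :
    roundingError v t X Xᶜ = ∑ g ∈ X, v g - ∑ g, t g * v g := by
  rw [roundingError, ← sum_add_sum_compl X fun g => t g * v g]
  simp only [sub_mul, one_mul, sum_sub_distrib]
  ring

theorem exists_rounding (hcard : 3 ≤ Fintype.card ι) {v : Fin 3 → ι → ℝ} (hv : ∀ j g, 0 ≤ v j g)
    {x : ι → ℝ} (hx : x ∈ Set.Icc 0 1) :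
    ∃ t X, (∀ j, ∑ g, t g * v j g = ∑ g, x g * v j g) ∧
      ∃ i, LooseRounding (v i) t X Xᶜ ∧ ∀ j ≠ i, TightRounding (v j) t X Xᶜ := by
  obtain ⟨t, ht, htx, hfrac⟩ := exists_mem_Icc_sum_mul_eq_card_interior_le univ v hx
  obtain ⟨T, hsub, hT⟩ := exists_superset_card_eq (by simpa using hfrac) hcard
  obtain ⟨U, D, hdisj, rfl, i, hloose, htight⟩ :=
    RoundsWell.of_card_eq_three hv (fun g => ⟨ht.1 g, ht.2 g⟩) hT
  have hint (g : ι) (hgU : g ∉ U) (hgD : g ∉ D) : t g = 0 ∨ t g = 1 := by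
    by_contra! hg
    exact (mem_union.1 (hsub (by simpa using hg))).elim hgU hgD
  let X : Finset ι := {g | g ∈ U ∨ g ∉ D ∧ t g = 1}
  have hU : U ⊆ X := fun g hg => by simp [X, hg]
  have hD : D ⊆ Xᶜ := fun g hg => by simp [X, hg, disjoint_right.1 hdisj hg]
  have herr (j : Fin 3) : roundingError (v j) t X Xᶜ = roundingError (v j) t U D := by
    refine roundingError_eq_of_subset hU hD (fun g hg hgU => ?_) fun g hg hgD => ?_
    · simp_all [X]
    · simp only [X, compl_filter, mem_filter, mem_univ, true_and, not_or] at hg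
      exact (hint g hg.1 hgD).resolve_right fun h1 => hg.2 ⟨hgD, h1⟩
  exact ⟨t, X, htx, i, hloose.of_subset hU hD (herr i),
    fun j hj => (htight j hj).of_subset hU hD (herr j)⟩

end FractionalBundle

section Halving

variable {ι κ J : Type*} {v : ι → ℝ} {P Q R : Finset ι}

/-- Up to `c` times the best item of the larger bundle, `P` and `Q` have the same value. -/
structure AlmostBalanced (c : ℝ) (v : ι → ℝ) (P Q : Finset ι) : Prop where
  left_le : ∑ g ∈ P, v g ≤ ∑ g ∈ Q, v g + c * maxValue v P
  right_le : ∑ g ∈ Q, v g ≤ ∑ g ∈ P, v g + c * maxValue v Q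

theorem AlmostBalanced.symm {c : ℝ} (h : AlmostBalanced c v P Q) : AlmostBalanced c v Q P :=
  ⟨h.right_le, h.left_le⟩

theorem sum_le_sum_add_card_mul_maxValue {θ : ι → ℝ} (hv : ∀ g, 0 ≤ v g)
    (hθ : ∀ g, θ g ∈ Set.Icc 0 1) (hPQ : ∑ g ∈ P, θ g * v g = ∑ g ∈ Q, θ g * v g) :
    ∑ g ∈ P, v g ≤ ∑ g ∈ Q, v g + #{g ∈ P | θ g ≠ 1} * maxValue v P := by
  have hQ : ∑ g ∈ Q, θ g * v g ≤ ∑ g ∈ Q, v g :=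
    sum_le_sum fun g _ => mul_le_of_le_one_left (hv g) (hθ g).2
  have hterm (g : ι) (hg : g ∈ P) : v g ≤ θ g * v g + if θ g ≠ 1 then maxValue v P else 0 := by
    split_ifs with h
    · linarith [le_maxValue (v := v) hg, mul_nonneg (hθ g).1 (hv g)]
    · rw [not_not.1 h, one_mul, add_zero]
  calc ∑ g ∈ P, v g
    _ ≤ ∑ g ∈ P, θ g * v g + ∑ g ∈ P, if θ g ≠ 1 then maxValue v P else 0 := by
        rw [← sum_add_distrib]
        exact sum_le_sum hterm
    _ ≤ ∑ g ∈ Q, v g + #{g ∈ P | θ g ≠ 1} * maxValue v P := by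
        rw [← sum_filter, sum_const, nsmul_eq_mul]
        linarith

/-- When the items of `R` are grouped in pairs, `π g` being the pair of `g` and `b g` its side, this
is the bundle with the item on side `ε k` of each pair `k`. -/
def selection (R : Finset ι) (π : ι → κ) (b : ι → Bool) (ε : κ → Bool) : Finset ι :=
  {g ∈ R | b g = ε (π g)}

variable {π : ι → κ} {b : ι → Bool}

theorem selection_not (ε : κ → Bool) :
    selection R π b (fun k => !ε k) = {g ∈ R | b g ≠ ε (π g)} := by
  simp only [selection, Bool.eq_not]

theorem injOn_selection (hinj : Set.InjOn (fun g => (π g, b g)) R) (ε : κ → Bool) :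
    Set.InjOn π (selection R π b ε) := by
  intro g hg g' hg' hgg'
  obtain ⟨hgR, hgb⟩ := mem_filter.1 hg
  obtain ⟨hgR', hgb'⟩ := mem_filter.1 hg'
  exact hinj hgR hgR' (Prod.ext hgg' (by simp only [hgb, hgb', hgg']))

variable [Fintype J]

/-- A vertex of the polytope of sign vectors `y ∈ [-1, 1]^κ` balancing all valuations gives both
the sides (the signs of `y`) and the weights (its absolute values). -/
theorem exists_selection_weighted_sum_eq [DecidableEq κ] (R : Finset ι) (π : ι → κ) (b : ι → Bool)
    (w : J → ι → ℝ) :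
    ∃ (ε : κ → Bool) (θ : κ → ℝ), (∀ k, θ k ∈ Set.Icc 0 1) ∧
      #{k ∈ R.image π | θ k ≠ 1} ≤ Fintype.card J ∧
      ∀ j, ∑ g ∈ selection R π b ε, θ (π g) * w j g =
        ∑ g ∈ selection R π b (fun k => !ε k), θ (π g) * w j g := by
  let signed (j : J) (g : ι) : ℝ := if b g then -w j g else w j g
  obtain ⟨y, hy, hyw, hcard⟩ := exists_mem_Icc_sum_mul_eq_card_interior_le (R.image π)
    (fun j k => ∑ g ∈ R with π g = k, signed j g) (l := -1) (u := 1) (x := 0) ⟨by simp, by simp⟩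
  refine ⟨fun k => decide (y k < 0), fun k => |y k|,
    fun k => ⟨abs_nonneg _, abs_le.2 ⟨hy.1 k, hy.2 k⟩⟩, ?_, fun j => ?_⟩
  · simpa only [abs_eq zero_le_one, Ne, not_or, and_comm, Pi.one_apply, Pi.neg_apply] using hcard
  · have habs (g : ι) : y (π g) * signed j g = if b g = decide (y (π g) < 0)
        then |y (π g)| * w j g else -(|y (π g)| * w j g) := by
      obtain h | h := lt_or_ge (y (π g)) 0
      · by_cases hb : b g <;> simp [signed, hb, h, abs_of_neg h]
      · by_cases hb : b g <;> simp [signed, hb, h.not_gt, abs_of_nonneg h]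
    have hzero : ∑ g ∈ R, y (π g) * signed j g = 0 := by
      rw [← sum_fiberwise_of_maps_to fun g hg => mem_image_of_mem π hg]
      refine Eq.trans (sum_congr rfl fun k _ => ?_) ((hyw j).trans (by simp))
      rw [mul_sum]
      exact sum_congr rfl fun g hg => by rw [(mem_filter.1 hg).2]
    rw [sum_congr rfl fun g _ => habs g, sum_ite, sum_neg_distrib] at hzero
    rw [selection_not]
    exact add_neg_eq_zero.1 hzero

theorem exists_almostBalanced_selection (hinj : Set.InjOn (fun g => (π g, b g)) R)
    {w : J → ι → ℝ} (hw : ∀ j g, 0 ≤ w j g) :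
    ∃ ε : κ → Bool, ∀ j, AlmostBalanced (Fintype.card J) (w j)
      (selection R π b ε) (selection R π b fun k => !ε k) := by
  classical
  obtain ⟨ε, θ, hθ, hcard, heq⟩ := exists_selection_weighted_sum_eq R π b w
  have hfrac (ε' : κ → Bool) : #{g ∈ selection R π b ε' | θ (π g) ≠ 1} ≤ Fintype.card J := by
    refine (card_le_card_of_injOn π (fun g hg => ?_) ?_).trans hcard
    · obtain ⟨hg, hθg⟩ := mem_filter.1 hg
      exact mem_filter.2 ⟨mem_image_of_mem π (mem_filter.1 hg).1, hθg⟩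
    · exact (injOn_selection hinj ε').mono (filter_subset _ _)
  have hle {ε₁ ε₂ : κ → Bool} {j : J} (h : ∑ g ∈ selection R π b ε₁, θ (π g) * w j g =
      ∑ g ∈ selection R π b ε₂, θ (π g) * w j g) :
      ∑ g ∈ selection R π b ε₁, w j g ≤ ∑ g ∈ selection R π b ε₂, w j g +
        Fintype.card J * maxValue (w j) (selection R π b ε₁) := by
    refine (sum_le_sum_add_card_mul_maxValue (hw j) (fun g => hθ (π g)) h).trans ?_
    gcongr
    · exact maxValue_nonneg
    · exact hfrac ε₁
  exact ⟨ε, fun j => ⟨hle (heq j), hle (heq j).symm⟩⟩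

section Ranking

variable {v : ι → ℝ} {P Q R : Finset ι} {ρ : ι → ℕ}

/-- `ρ` lists the items of `R` by decreasing value under `v`, the most valuable one being number
`0`. -/
structure IsRanking (v : ι → ℝ) (R : Finset ι) (ρ : ι → ℕ) : Prop where
  bijOn : Set.BijOn ρ R (Set.Iio #R)
  le_of_le : ∀ g ∈ R, ∀ h ∈ R, ρ g ≤ ρ h → v h ≤ v g

theorem exists_isRanking (v : ι → ℝ) (R : Finset ι) : ∃ ρ, IsRanking v R ρ := by
  classical
  induction R using induction_on_min_value (f := v) with
  | empty => exact ⟨0, by simp, by simp⟩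
  | insert a R ha hmin ih =>
    obtain ⟨ρ, hbij, hle⟩ := ih
    have hne (g : ι) (hg : g ∈ R) : g ≠ a := ne_of_mem_of_not_mem hg ha
    have hlt (g : ι) (hg : g ∈ R) : ρ g < #R := hbij.mapsTo hg
    refine ⟨Function.update ρ a #R, ?_, ?_⟩
    · have hold : Set.BijOn (Function.update ρ a #R) R (Set.Iio #R) :=
        hbij.congr fun g hg => (Function.update_of_ne (hne g hg) _ _).symm
      rw [card_insert_of_notMem ha, coe_insert, ← Order.succ_eq_add_one, Order.Iio_succ_eq_insert]
      simpa only [Function.update_self] using hold.insert (a := a) (by simp)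
    · intro g hg h hh hgh
      obtain rfl | hgR := mem_insert.1 hg <;> obtain rfl | hhR := mem_insert.1 hh
      · exact le_rfl
      · rw [Function.update_self, Function.update_of_ne (hne h hhR)] at hgh
        exact absurd (hlt h hhR) hgh.not_gt
      · exact hmin g hgR
      · rw [Function.update_of_ne (hne g hgR), Function.update_of_ne (hne h hhR)] at hgh
        exact hle g hgR h hhR hgh

/-- The bundle containing, for each `k`, the item number `2 * k` or `2 * k + 1` of the ranking `ρ`,
according to whether `ε k` is false or true. -/
def rankSelection (R : Finset ι) (ρ : ι → ℕ) (ε : ℕ → Bool) : Finset ι :=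
  selection R (fun g => (ρ g).div2) (fun g => (ρ g).bodd) ε

namespace IsRanking

variable (hρ : IsRanking v R ρ)
include hρ

theorem injOn_div2_bodd : Set.InjOn (fun g => ((ρ g).div2, (ρ g).bodd)) R := by
  intro g hg h hh hgh
  obtain ⟨hdiv, hbodd⟩ := Prod.ext_iff.1 hgh
  dsimp only at hdiv hbodd
  refine hρ.bijOn.injOn hg hh ?_
  rw [← Nat.bit_bodd_div2 (ρ g), hdiv, hbodd, Nat.bit_bodd_div2]

theorem injOn_div2 (ε : ℕ → Bool) :
    Set.InjOn (fun g => (ρ g).div2) (rankSelection R ρ ε) :=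
  injOn_selection hρ.injOn_div2_bodd ε

theorem exists_mem_rankSelection (ε : ℕ → Bool) {k : ℕ} {h : ι} (hh : h ∈ R)
    (hk : Nat.bit (ε k) k ≤ ρ h) :
    ∃ g ∈ rankSelection R ρ ε, (ρ g).div2 = k ∧ v h ≤ v g := by
  obtain ⟨g, hg, hgk⟩ := hρ.bijOn.surjOn (hk.trans_lt (hρ.bijOn.mapsTo hh))
  refine ⟨g, mem_filter.2 ⟨hg, ?_⟩, ?_, hρ.le_of_le g hg h hh (hgk.trans_le hk)⟩
  · simp only [hgk, Nat.bodd_bit, Nat.div2_bit]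
  · rw [hgk, Nat.div2_bit]

theorem sum_rankSelection_div2_eq_zero_le (ε : ℕ → Bool) :
    ∑ g ∈ rankSelection R ρ ε with (ρ g).div2 = 0, v g ≤ maxValue v (rankSelection R ρ ε) := by
  refine (sum_le_maxValue_of_card_le_one (card_le_one.2 fun g hg h hh => ?_)).trans
    (maxValue_mono (filter_subset _ _))
  obtain ⟨hgP, hg0⟩ := mem_filter.1 hg
  obtain ⟨hhP, hh0⟩ := mem_filter.1 hh
  exact hρ.injOn_div2 ε hgP hhP (hg0.trans hh0.symm)

/-- In a bundle choosing one item per pair, an item is worth no more than the item that the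
opposite bundle has in the preceding pair. Only the item in the first pair is left over. -/
theorem sum_rankSelection_le (hv : ∀ g, 0 ≤ v g) (ε ε' : ℕ → Bool) :
    ∑ g ∈ rankSelection R ρ ε, v g ≤
      ∑ g ∈ rankSelection R ρ ε', v g + maxValue v (rankSelection R ρ ε) := by
  classical
  set P := rankSelection R ρ ε
  set Q := rankSelection R ρ ε'
  have hfirst := hρ.sum_rankSelection_div2_eq_zero_le ε
  have hpred (g : ι) (hg : g ∈ P.filter fun g => (ρ g).div2 ≠ 0) :
      ∃ h ∈ Q, (ρ h).div2 = (ρ g).div2 - 1 ∧ v g ≤ v h := by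
    obtain ⟨hgP, hg0⟩ := mem_filter.1 hg
    refine hρ.exists_mem_rankSelection ε' (mem_filter.1 hgP).1 ?_
    have htoNat := Bool.toNat_le (ε' ((ρ g).div2 - 1))
    rw [Nat.div2_val] at hg0 htoNat ⊢
    rw [Nat.bit_val]
    omega
  choose! pred hpredQ hdiv2 hle using hpred
  have hrest : ∑ g ∈ P with (ρ g).div2 ≠ 0, v g ≤ ∑ g ∈ Q, v g := by
    refine (sum_le_sum hle).trans ?_
    rw [← sum_image (f := v) (g := pred) fun g hg h hh hgh => ?_]
    · exact sum_le_sum_of_subset_of_nonneg (image_subset_iff.2 hpredQ) fun g _ _ => hv g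
    · obtain ⟨hgP, hg0⟩ := mem_filter.1 hg
      obtain ⟨hhP, hh0⟩ := mem_filter.1 hh
      have hpred_eq := (hdiv2 g hg).symm.trans ((congrArg (fun g => (ρ g).div2) hgh).trans
        (hdiv2 h hh))
      exact hρ.injOn_div2 ε hgP hhP (show (ρ g).div2 = (ρ h).div2 by omega)
  rw [← sum_filter_add_sum_filter_not P fun g => (ρ g).div2 = 0]
  linarith

theorem secondValue_le_maxValue_rankSelection (ε : ℕ → Bool) :
    secondValue v R ≤ maxValue v (rankSelection R ρ ε) := by
  refine secondValue_le maxValue_nonneg fun g hg g' hg' hne => ?_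
  wlog hlt : ρ g < ρ g' generalizing g g'
  · rw [min_comm]
    have hρne : ρ g ≠ ρ g' := fun h => hne (hρ.bijOn.injOn hg hg' h)
    exact this g' hg' g hg hne.symm (hρne.lt_or_gt.resolve_left hlt)
  have hbit : Nat.bit (ε 0) 0 ≤ ρ g' := by
    have htoNat := Bool.toNat_le (ε 0)
    rw [Nat.bit_val]
    omega
  obtain ⟨h, hh, -, hle⟩ := hρ.exists_mem_rankSelection ε hg' hbit
  exact (min_le_right _ _).trans (hle.trans (le_maxValue hh))

end IsRanking

end Ranking

theorem exists_halving [DecidableEq ι] (R : Finset ι) {v : ι → ℝ} (hv : ∀ g, 0 ≤ v g)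
    {w : J → ι → ℝ} (hw : ∀ j g, 0 ≤ w j g) :
    ∃ P ⊆ R, AlmostBalanced 1 v P (R \ P) ∧ secondValue v R ≤ maxValue v P ∧
      secondValue v R ≤ maxValue v (R \ P) ∧
      ∀ j, AlmostBalanced (Fintype.card J) (w j) P (R \ P) := by
  obtain ⟨ρ, hρ⟩ := exists_isRanking v R
  obtain ⟨ε, hε⟩ := exists_almostBalanced_selection hρ.injOn_div2_bodd hw
  have hsdiff : R \ rankSelection R ρ ε = rankSelection R ρ fun k => !ε k := by
    rw [rankSelection, rankSelection, selection_not, selection, filter_not]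
  refine ⟨rankSelection R ρ ε, filter_subset _ _, ?_⟩
  rw [hsdiff]
  refine ⟨⟨?_, ?_⟩, hρ.secondValue_le_maxValue_rankSelection ε,
    hρ.secondValue_le_maxValue_rankSelection _, hε⟩ <;>
  · rw [one_mul]
    exact hρ.sum_rankSelection_le hv _ _

end Halving

section Envy

variable {ι : Type*} [Fintype ι] [DecidableEq ι] {v t : ι → ℝ} {A B X P Q : Finset ι}

/-- The envy of an owner of `A` with valuation `v` for the owner of `B` disappears once the best
item outside of `A` is added to `A` and the best item of `B` is removed from `B`. -/
def BoundedEnvy (v : ι → ℝ) (A B : Finset ι) : Prop :=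
  ∑ g ∈ B, v g ≤ ∑ g ∈ A, v g + maxValue v Aᶜ + maxValue v B

theorem BoundedEnvy.exists_sum_sdiff_le (h : BoundedEnvy v A B) (hv : ∀ g, 0 ≤ v g)
    (hAB : Disjoint A B) : ∃ S T : Finset ι, Disjoint S A ∧ #S ≤ 1 ∧ T ⊆ B ∧ #T ≤ 1 ∧
      ∑ g ∈ B \ T, v g ≤ ∑ g ∈ A ∪ S, v g := by
  obtain rfl | hB := B.eq_empty_or_nonempty
  · exact ⟨∅, ∅, by simp, by simp, by simp, by simp, by simpa using sum_nonneg fun g _ => hv g⟩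
  obtain ⟨b, hb, hbmax⟩ := exists_mem_eq_maxValue hv hB
  obtain ⟨a, ha, hamax⟩ := exists_mem_eq_maxValue hv ⟨b, mem_compl.2 (disjoint_right.1 hAB hb)⟩
  have hsing : Disjoint A {a} := disjoint_singleton_right.2 (mem_compl.1 ha)
  refine ⟨{a}, {b}, hsing.symm, by simp, singleton_subset_iff.2 hb, by simp, ?_⟩
  rw [sdiff_singleton_eq_erase, sum_erase_eq_sub hb, sum_union hsing, sum_singleton, hbmax, hamax]
  linarith [show ∑ g ∈ B, v g ≤ _ from h]

theorem boundedEnvy_of_card_le_one (hv : ∀ g, 0 ≤ v g) (hB : #B ≤ 1) : BoundedEnvy v A B := by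
  have hA : 0 ≤ ∑ g ∈ A, v g := sum_nonneg fun g _ => hv g
  rw [BoundedEnvy]
  linarith [sum_le_maxValue_of_card_le_one (v := v) hB, maxValue_nonneg (v := v) (S := Aᶜ)]

theorem efpm_of_boundedEnvy {n : ℕ} {v : Fin n → ι → ℝ} (hv : ∀ i g, 0 ≤ v i g)
    {A : Fin n → Finset ι} (hA : ∀ i j, i ≠ j → Disjoint (A i) (A j))
    (h : ∀ i j, i ≠ j → BoundedEnvy (v i) (A i) (A j)) : EFpm univ v A 1 1 := by
  intro i j
  obtain rfl | hij := eq_or_ne i j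
  · exact ⟨∅, ∅, by simp⟩
  · obtain ⟨S, T, hST⟩ := (h i j hij).exists_sum_sdiff_le (hv i) (hA i j hij)
    exact ⟨S, T, subset_univ S, hST⟩

theorem isPartition_univ_cons_cons_cons (hX : Xᶜ = P ∪ Q) (hPQ : Disjoint P Q) :
    IsPartition univ ![X, P, Q] := by
  have hXP : Disjoint X P := subset_compl_iff_disjoint_left.1 (hX ▸ subset_union_left)
  have hXQ : Disjoint X Q := subset_compl_iff_disjoint_left.1 (hX ▸ subset_union_right)
  refine ⟨fun _ => subset_univ _, fun i j hij => ?_, fun g _ => ?_⟩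
  · fin_cases i <;> fin_cases j <;>
      first | exact absurd rfl hij | assumption | (apply Disjoint.symm; assumption)
  · by_cases hg : g ∈ X
    · exact ⟨0, hg⟩
    · exact (mem_union.1 (hX ▸ mem_compl.2 hg)).elim (fun hP => ⟨1, hP⟩) fun hQ => ⟨2, hQ⟩

theorem three_mul_roundingError (ht : 3 * ∑ g, t g * v g = ∑ g, v g) (hX : Xᶜ = P ∪ Q)
    (hPQ : Disjoint P Q) :
    3 * roundingError v t X Xᶜ = 2 * ∑ g ∈ X, v g - ∑ g ∈ P, v g - ∑ g ∈ Q, v g := by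
  rw [roundingError_compl, mul_sub, ht, ← sum_add_sum_compl X v, hX, sum_union hPQ]
  ring

theorem TightRounding.boundedEnvy (h : TightRounding v t X Xᶜ)
    (ht : 3 * ∑ g, t g * v g = ∑ g, v g) (hX : Xᶜ = P ∪ Q) (hPQ : Disjoint P Q)
    (hbal : AlmostBalanced 2 v P Q) :
    BoundedEnvy v X P ∧ BoundedEnvy v P X ∧ BoundedEnvy v P Q := by
  have herr := three_mul_roundingError ht hX hPQ
  have hQP : maxValue v Q ≤ maxValue v Pᶜ :=
    maxValue_mono (subset_compl_iff_disjoint_right.2 hPQ.symm)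
  simp only [BoundedEnvy]
  refine ⟨?_, ?_, ?_⟩ <;> linarith [h.upper, h.lower, hbal.left_le, hbal.right_le]

theorem LooseRounding.boundedEnvy (h : LooseRounding v t X Xᶜ)
    (ht : 3 * ∑ g, t g * v g = ∑ g, v g) (hX : Xᶜ = P ∪ Q) (hPQ : Disjoint P Q)
    (hbal : AlmostBalanced 1 v P Q) (hsecond : secondValue v Xᶜ ≤ maxValue v P) :
    BoundedEnvy v X P ∧ BoundedEnvy v P X ∧ BoundedEnvy v P Q := by
  have herr := three_mul_roundingError ht hX hPQ
  have hQP : maxValue v Q ≤ maxValue v Pᶜ :=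
    maxValue_mono (subset_compl_iff_disjoint_right.2 hPQ.symm)
  have hXP : maxValue v X ≤ maxValue v Pᶜ :=
    maxValue_mono (subset_compl_comm.1 (hX ▸ subset_union_left))
  have hQ : 0 ≤ maxValue v Q := maxValue_nonneg
  simp only [BoundedEnvy]
  refine ⟨?_, ?_, ?_⟩ <;> linarith [h.upper, h.lower, hbal.left_le, hbal.right_le]

/-- Round the fractional bundle consisting of a third of each item to a bundle `X`, and split the
remaining items into halves, letting the agent with the loose rounding rank them. -/
theorem exists_boundedEnvy_of_three_le_card (hcard : 3 ≤ Fintype.card ι) {v : Fin 3 → ι → ℝ}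
    (hv : ∀ j g, 0 ≤ v j g) :
    ∃ A : Fin 3 → Finset ι, IsPartition univ A ∧
      ∀ j p q, p ≠ q → BoundedEnvy (v j) (A p) (A q) := by
  obtain ⟨t, X, hsum, i, hloose, htight⟩ :=
    exists_rounding hcard hv (x := fun _ => 1 / 3) ⟨fun _ => by norm_num, fun _ => by norm_num⟩
  have ht (j : Fin 3) : 3 * ∑ g, t g * v j g = ∑ g, v j g := by
    rw [hsum, ← mul_sum]
    ring
  obtain ⟨P, hPX, hbali, hsecondP, hsecondQ, hbal⟩ :=
    exists_halving Xᶜ (hv i) fun (j : {j // j ≠ i}) => hv j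
  set Q := Xᶜ \ P
  have hX : Xᶜ = P ∪ Q := (union_sdiff_of_subset hPX).symm
  have hPQ : Disjoint P Q := disjoint_sdiff
  have hother (j : {j // j ≠ i}) : AlmostBalanced 2 (v j) P Q := by simpa using hbal j
  have hboth (j : Fin 3) :
      (BoundedEnvy (v j) X P ∧ BoundedEnvy (v j) P X ∧ BoundedEnvy (v j) P Q) ∧
        BoundedEnvy (v j) X Q ∧ BoundedEnvy (v j) Q X ∧ BoundedEnvy (v j) Q P := by
    have hX' : Xᶜ = Q ∪ P := hX.trans (union_comm P Q)
    obtain rfl | hj := eq_or_ne j i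
    · exact ⟨hloose.boundedEnvy (ht j) hX hPQ hbali hsecondP,
        hloose.boundedEnvy (ht j) hX' hPQ.symm hbali.symm hsecondQ⟩
    · exact ⟨(htight j hj).boundedEnvy (ht j) hX hPQ (hother ⟨j, hj⟩),
        (htight j hj).boundedEnvy (ht j) hX' hPQ.symm (hother ⟨j, hj⟩).symm⟩
  refine ⟨![X, P, Q], isPartition_univ_cons_cons_cons hX hPQ, fun j p q hpq => ?_⟩
  obtain ⟨⟨hXP, hPX, hPQ⟩, hXQ, hQX, hQP⟩ := hboth j
  fin_cases p <;> fin_cases q <;> first | exact absurd rfl hpq | assumption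

theorem exists_boundedEnvy {v : Fin 3 → ι → ℝ} (hv : ∀ j g, 0 ≤ v j g) :
    ∃ A : Fin 3 → Finset ι, IsPartition univ A ∧
      ∀ j p q, p ≠ q → BoundedEnvy (v j) (A p) (A q) := by
  obtain hcard | hcard := le_or_gt 3 (Fintype.card ι)
  · exact exists_boundedEnvy_of_three_le_card hcard hv
  obtain ⟨e⟩ : Nonempty (ι ↪ Fin 3) :=
    Function.Embedding.nonempty_of_card_le (by simpa using hcard.le)
  refine ⟨fun p => {g | e g = p}, ⟨fun p => subset_univ _, fun p q hpq => ?_,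
    fun g _ => ⟨e g, by simp⟩⟩, fun j p q _ => boundedEnvy_of_card_le_one (hv j) ?_⟩
  · exact disjoint_filter.2 fun g _ hp hq => hpq (hp.symm.trans hq)
  · exact card_le_one.2 fun g hg h hh =>
      e.injective ((mem_filter.1 hg).2.trans (mem_filter.1 hh).2.symm)

end Envy

section Realization

variable {n m : ℕ} [NeZero n] {v : Fin n → Fin m → ℝ} {A : Fin n → Finset (Fin m)}

/-- Each agent owns each bundle once when the bundles are passed around cyclically. -/
theorem realizable_one_div_of_isPartition {u w : ℕ} (hA : IsPartition univ A)
    (h : ∀ k, EFpm univ v (fun i => A (i + k)) u w) : Realizable v u w fun _ _ => 1 / n := by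
  obtain ⟨-, hdisj, hcover⟩ := hA
  refine ⟨n, fun _ => 1 / n, fun k i => A (i + k), fun _ => by positivity, by simp [NeZero.ne n],
    fun k => ⟨fun i => subset_univ _, fun i j hij => hdisj _ _ (by simpa using hij),
      fun g hg => ?_⟩, h, fun i g => ?_⟩
  · obtain ⟨p, hp⟩ := hcover g hg
    exact ⟨p - k, by simpa using hp⟩
  · obtain ⟨p, hp⟩ := hcover g (mem_univ g)
    have hmem (k : Fin n) : g ∈ A (i + k) ↔ k = p - i := by
      refine ⟨fun hk => eq_sub_of_add_eq' ?_, fun hk => by rwa [hk, add_sub_cancel]⟩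
      by_contra hne
      exact disjoint_left.1 (hdisj _ _ hne) hk hp
    simp only [hmem, sum_ite_eq', mem_univ, if_true]

theorem realizable_one_third {v : Fin 3 → Fin m → ℝ} (hv : ∀ j g, 0 ≤ v j g) :
    Realizable v 1 1 fun _ _ => 1 / 3 := by
  obtain ⟨A, hA, henvy⟩ := exists_boundedEnvy hv
  have hne {i j : Fin 3} (k : Fin 3) (hij : i ≠ j) : i + k ≠ j + k := by simpa using hij
  exact_mod_cast realizable_one_div_of_isPartition hA fun k => efpm_of_boundedEnvy hv
    (fun i j hij => hA.2.1 _ _ (hne k hij)) fun i j hij => henvy i _ _ (hne k hij)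

end Realization

/-- For three agents and any number of items there is a fractional allocation rule which is
truthful and whose output is always EF^{+1}_{-1}-realizable. -/
theorem exists_truthful_EF11_rule_three_agents (m : ℕ) :
    ∃ F : (Fin 3 → Fin m → ℝ) → (Fin 3 → Fin m → ℝ),
      (∀ val : Fin 3 → Fin m → ℝ, (∀ i g, 0 ≤ val i g) →
        (∀ i g, 0 ≤ F val i g) ∧ (∀ g, ∑ i, F val i g = 1)) ∧
      (∀ val : Fin 3 → Fin m → ℝ, (∀ i g, 0 ≤ val i g) →
        ∀ i : Fin 3, ∀ v' : Fin m → ℝ, (∀ g, 0 ≤ v' g) →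
          ∑ g, val i g * F (Function.update val i v') i g ≤
            ∑ g, val i g * F val i g) ∧
      (∀ val : Fin 3 → Fin m → ℝ, (∀ i g, 0 ≤ val i g) →
        Realizable val 1 1 (F val)) := by
  exact ⟨fun _ _ _ => 1 / 3, fun _ _ => ⟨fun _ _ => by norm_num, fun _ => by norm_num⟩,
    fun _ _ _ _ _ => le_rfl, fun _ hval => realizable_one_third hval⟩
end

section
/- Let S be a finite set whose cardinality k is divisible by 3, and let P and Q be two partitions of S into k/3 blocks of size 3 each. Then the elements of S can be colored with 3 colors so that within every 3-element block of P and within every 3-element block of Q the three elements receive three pairwise distinct colors. -/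
open Finset

/-! Two partitions into blocks of the same finite size `n > 0` have a common transversal: any `m`
blocks of one partition contain `m * n` points, so they meet at least `m` blocks of the other.
Hall's theorem thus gives, in both directions, an injection sending each block to one that it
meets, and the Schröder–Bernstein argument merges the two into a bijection. Color a common
transversal with one color, remove it, and repeat with the remaining blocks of size `n - 1`. -/

section

variable {α ι κ : Type*} {P : ι → Finset α} {Q : κ → Finset α} {T : Set α} {n : ℕ}

/-- A transversal (system of representatives) of a family of blocks: a set that meets every block
in exactly one point. Points outside all blocks are allowed. -/
def IsTransversal (P : ι → Finset α) (T : Set α) : Prop :=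
  ∀ i, ∃! x, x ∈ P i ∧ x ∈ T

theorem isTransversal_range {e : ι → α} (hP : Pairwise (Function.onFun Disjoint P))
    (he : ∀ i, e i ∈ P i) : IsTransversal P (Set.range e) := by
  refine fun i => ⟨e i, ⟨he i, i, rfl⟩, ?_⟩
  rintro _ ⟨hk, k, rfl⟩
  rw [hP.eq (Finset.not_disjoint_iff.2 ⟨e k, he k, hk⟩)]

theorem exists_injective_forall_not_disjoint (hn : n ≠ 0)
    (hPcard : ∀ i, n ≤ #(P i)) (hQcard : ∀ j, #(Q j) ≤ n)
    (hPdisj : Pairwise (Function.onFun Disjoint P)) (hPQ : ∀ i, ∀ x ∈ P i, ∃ j, x ∈ Q j) :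
    ∃ f : ι → κ, Function.Injective f ∧ ∀ i, ¬Disjoint (P i) (Q (f i)) := by
  classical
  choose q hq using hPQ
  let N (i : ι) : Finset κ := (P i).attach.image fun x => q i x.1 x.2
  have hall (s : Finset ι) : #s ≤ #(s.biUnion N) := by
    have hsub : s.biUnion P ⊆ (s.biUnion N).biUnion Q := by
      intro x hx
      obtain ⟨i, hi, hx⟩ := mem_biUnion.1 hx
      exact mem_biUnion.2 ⟨q i x hx,
        mem_biUnion.2 ⟨i, hi, mem_image.2 ⟨⟨x, hx⟩, mem_attach _ _, rfl⟩⟩, hq i x hx⟩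
    refine Nat.le_of_mul_le_mul_right ?_ (Nat.pos_of_ne_zero hn)
    calc #s * n ≤ ∑ i ∈ s, #(P i) := card_nsmul_le_sum s _ n fun i _ => hPcard i
      _ = #(s.biUnion P) := (card_biUnion fun i _ k _ hik => hPdisj hik).symm
      _ ≤ #((s.biUnion N).biUnion Q) := card_le_card hsub
      _ ≤ #(s.biUnion N) * n := card_biUnion_le_card_mul _ _ n fun j _ => hQcard j
  obtain ⟨f, hf, hfN⟩ := (all_card_le_biUnion_card_iff_exists_injective N).1 hall
  refine ⟨f, hf, fun i => ?_⟩
  obtain ⟨x, -, hx⟩ := mem_image.1 (hfN i)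
  exact not_disjoint_iff.2 ⟨x, x.2, hx ▸ hq i x.1 x.2⟩

theorem exists_common_transversal (hn : n ≠ 0) (hPcard : ∀ i, #(P i) = n)
    (hQcard : ∀ j, #(Q j) = n) (hPdisj : Pairwise (Function.onFun Disjoint P))
    (hQdisj : Pairwise (Function.onFun Disjoint Q)) (hPQ : ∀ x, (∃ i, x ∈ P i) ↔ ∃ j, x ∈ Q j) :
    ∃ T : Set α, IsTransversal P T ∧ IsTransversal Q T := by
  obtain ⟨f, hf, hfPQ⟩ := exists_injective_forall_not_disjoint hn (fun i => (hPcard i).ge)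
    (fun j => (hQcard j).le) hPdisj fun i x hx => (hPQ x).1 ⟨i, hx⟩
  obtain ⟨g, hg, hgQP⟩ := exists_injective_forall_not_disjoint hn (fun j => (hQcard j).ge)
    (fun i => (hPcard i).le) hQdisj fun j x hx => (hPQ x).2 ⟨j, hx⟩
  obtain ⟨h, hh, hhPQ⟩ := Function.Embedding.schroeder_bernstein_of_rel hf hg
    (fun i j => ¬Disjoint (P i) (Q j)) hfPQ fun j => disjoint_comm.not.1 (hgQP j)
  choose e heP heQ using fun i => not_disjoint_iff.1 (hhPQ i)
  have heQ' : IsTransversal (Q ∘ h) (Set.range e) :=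
    isTransversal_range (hQdisj.comp_of_injective hh.injective) heQ
  exact ⟨Set.range e, isTransversal_range hPdisj heP, hh.surjective.forall.2 heQ'⟩

namespace IsTransversal

theorem exists_filter_notMem_eq_erase [DecidableEq α] [DecidablePred (· ∈ T)]
    (hT : IsTransversal P T) (i : ι) :
    ∃ a ∈ P i, a ∈ T ∧ {x ∈ P i | x ∉ T} = (P i).erase a := by
  obtain ⟨a, ⟨haP, haT⟩, ha⟩ := hT i
  refine ⟨a, haP, haT, ?_⟩
  ext x
  grind

theorem card_filter_notMem_add_one [DecidablePred (· ∈ T)] (hT : IsTransversal P T) (i : ι) :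
    #{x ∈ P i | x ∉ T} + 1 = #(P i) := by
  classical
  obtain ⟨a, haP, -, ha⟩ := hT.exists_filter_notMem_eq_erase i
  rw [ha, card_erase_add_one haP]

theorem bijOn_piecewise {β : Type*} [DecidablePred (· ∈ T)] (hT : IsTransversal P T) {i : ι}
    {c : α → β} {s : Set β} {b : β} (hc : Set.BijOn c ({x ∈ P i | x ∉ T} : Finset α) s)
    (hb : b ∉ s) : Set.BijOn (T.piecewise (fun _ => b) c) (P i) (insert b s) := by
  classical
  obtain ⟨a, haP, haT, ha⟩ := hT.exists_filter_notMem_eq_erase i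
  have hPi : (P i : Set α) = insert a (({x ∈ P i | x ∉ T} : Finset α) : Set α) := by
    rw [ha, ← coe_insert, insert_erase haP]
  have hrest : Set.BijOn (T.piecewise (fun _ => b) c) ({x ∈ P i | x ∉ T} : Finset α) s :=
    hc.congr fun x hx => (T.piecewise_eq_of_notMem _ _ (mem_filter.1 hx).2).symm
  have hab : T.piecewise (fun _ => b) c a = b := T.piecewise_eq_of_mem _ _ haT
  rw [hPi]
  simpa only [hab] using hrest.insert (a := a) (hab.symm ▸ hb)

end IsTransversal

/-- The colors are natural numbers because points outside all blocks need a value as well, even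
when `n = 0`. -/
theorem exists_coloring_forall_bijOn_Iio (hPcard : ∀ i, #(P i) = n) (hQcard : ∀ j, #(Q j) = n)
    (hPdisj : Pairwise (Function.onFun Disjoint P))
    (hQdisj : Pairwise (Function.onFun Disjoint Q)) (hPQ : ∀ x, (∃ i, x ∈ P i) ↔ ∃ j, x ∈ Q j) :
    ∃ c : α → ℕ, (∀ i, Set.BijOn c (P i) (Set.Iio n)) ∧ ∀ j, Set.BijOn c (Q j) (Set.Iio n) := by
  classical
  induction n generalizing P Q with
  | zero =>
    simp only [card_eq_zero] at hPcard hQcard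
    exact ⟨0, by simp [hPcard], by simp [hQcard]⟩
  | succ n ih =>
    obtain ⟨T, hTP, hTQ⟩ :=
      exists_common_transversal n.succ_ne_zero hPcard hQcard hPdisj hQdisj hPQ
    obtain ⟨c, hcP, hcQ⟩ := ih (P := fun i => {x ∈ P i | x ∉ T}) (Q := fun j => {x ∈ Q j | x ∉ T})
      (fun i => add_right_cancel ((hTP.card_filter_notMem_add_one i).trans (hPcard i)))
      (fun j => add_right_cancel ((hTQ.card_filter_notMem_add_one j).trans (hQcard j)))
      (fun _ _ h => disjoint_filter_filter (hPdisj h))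
      (fun _ _ h => disjoint_filter_filter (hQdisj h))
      (fun x => by simp only [mem_filter, exists_and_right, hPQ])
    have hIio : Set.Iio (n + 1) = insert n (Set.Iio n) := Order.Iio_succ_eq_insert n
    rw [hIio]
    exact ⟨T.piecewise (fun _ => n) c, fun i => hTP.bijOn_piecewise (hcP i) (lt_irrefl n),
      fun j => hTQ.bijOn_piecewise (hcQ j) (lt_irrefl n)⟩

theorem exists_three_coloring_of_two_triple_partitions_general (P Q : Set (Finset α))
    (hPcard : ∀ B ∈ P, #B = n) (hQcard : ∀ B ∈ Q, #B = n)
    (hPdisj : P.Pairwise Disjoint) (hQdisj : Q.Pairwise Disjoint)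
    (hPcov : ∀ x, ∃ B ∈ P, x ∈ B) (hQcov : ∀ x, ∃ B ∈ Q, x ∈ B) :
    ∃ c : α → Fin n, (∀ B ∈ P, Set.InjOn c B) ∧ ∀ B ∈ Q, Set.InjOn c B := by
  obtain ⟨c, hcP, hcQ⟩ := exists_coloring_forall_bijOn_Iio (P := ((↑) : P → Finset α))
    (Q := ((↑) : Q → Finset α)) (Subtype.forall.2 hPcard) (Subtype.forall.2 hQcard)
    (hPdisj.subtype _ _) (hQdisj.subtype _ _) (fun x => by simp [hPcov, hQcov])
  have hcn (x : α) : c x < n := by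
    obtain ⟨B, hB, hx⟩ := hPcov x
    exact (hcP ⟨B, hB⟩).mapsTo hx
  exact ⟨fun x => ⟨c x, hcn x⟩,
    fun B hB x hx y hy h => (hcP ⟨B, hB⟩).injOn hx hy (congrArg Fin.val h),
    fun B hB x hx y hy h => (hcQ ⟨B, hB⟩).injOn hx hy (congrArg Fin.val h)⟩

end

/-- Given two partitions `P` and `Q` of a finite set into blocks of size 3, the elements can
be 3-colored so that within every block of `P` and every block of `Q` the three elements get
pairwise distinct colors. -/
theorem exists_three_coloring_of_two_triple_partitions {α : Type*} [Fintype α]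
    [DecidableEq α] (P Q : Finset (Finset α))
    (hP3 : ∀ B ∈ P, B.card = 3) (hQ3 : ∀ B ∈ Q, B.card = 3)
    (hPdisj : ∀ B ∈ P, ∀ C ∈ P, B ≠ C → Disjoint B C)
    (hQdisj : ∀ B ∈ Q, ∀ C ∈ Q, B ≠ C → Disjoint B C)
    (hPcov : ∀ x : α, ∃ B ∈ P, x ∈ B)
    (hQcov : ∀ x : α, ∃ B ∈ Q, x ∈ B) :
    ∃ c : α → Fin 3,
      (∀ B ∈ P, ∀ x ∈ B, ∀ y ∈ B, x ≠ y → c x ≠ c y) ∧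
      (∀ B ∈ Q, ∀ x ∈ B, ∀ y ∈ B, x ≠ y → c x ≠ c y) := by
  obtain ⟨c, hcP, hcQ⟩ := exists_three_coloring_of_two_triple_partitions_general (P : Set _) Q
    hP3 hQ3 (fun B hB C hC => hPdisj B hB C hC) (fun B hB C hC => hQdisj B hB C hC) hPcov hQcov
  exact ⟨c, fun B hB x hx y hy => (hcP B hB).ne hx hy, fun B hB x hx y hy => (hcQ B hB).ne hx hy⟩
end

section
/- Let (A_1,A_2,A_3) and (A'_1,A'_2,A'_3) be allocations of two disjoint finite sets of indivisible items among the same three agents with additive valuations. If either (i) (A_1,A_2,A_3) is EF1 and (A'_1,A'_2,A'_3) is EF^{+1}_{-0}, or (ii) (A_1,A_2,A_3) is envy-free and (A'_1,A'_2,A'_3) is EF^{+1}_{-1}, then the combined allocation (A_1 ∪ A'_1, A_2 ∪ A'_2, A_3 ∪ A'_3) is EF^{+1}_{-1}. Moreover, if one of the two conditions holds for a particular agent i, then the combined allocation is EF^{+1}_{-1} for agent i. -/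
open Finset

/-- The allocation `A` of the items `M` is EF^{+u}_{-w} for the particular agent `i`. -/
def EFpmFor {ι : Type*} [DecidableEq ι] {n : ℕ} (M : Finset ι) (v : Fin n → ι → ℝ)
    (A : Fin n → Finset ι) (u w : ℕ) (i : Fin n) : Prop :=
  ∀ j : Fin n, ∃ Si Sj : Finset ι,
    Si ⊆ M ∧ Disjoint Si (A i) ∧ Si.card ≤ u ∧
    Sj ⊆ A j ∧ Sj.card ≤ w ∧
    ∑ g ∈ A j \ Sj, v i g ≤ ∑ g ∈ A i ∪ Si, v i g

/-!
Relaxed envy-freeness adds up over disjoint item sets: if agent `i` compares her bundle with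
`A j` after adding `S` and deleting `T`, and does the same in the second allocation with `S'` and
`T'`, then `S ∪ S'` and `T ∪ T'` work for the combined allocation, with both budgets added.
Hypotheses (i) and (ii) are the splittings `(0, 1) + (1, 0)` and `(0, 0) + (1, 1)` of `(1, 1)`.
-/

section

variable {ι : Type*} [DecidableEq ι] {n : ℕ} {M M' : Finset ι} {v : Fin n → ι → ℝ}
  {A A' : Fin n → Finset ι} {i : Fin n}

theorem union_sdiff_union_of_disjoint {s s' t t' : Finset ι} (hst' : Disjoint s t')
    (hs't : Disjoint s' t) : (s ∪ s') \ (t ∪ t') = s \ t ∪ s' \ t' := by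
  grind [disjoint_left]

theorem EFpmFor.union {u w u' w' : ℕ} (hM : Disjoint M M') (hA : ∀ j, A j ⊆ M)
    (hA' : ∀ j, A' j ⊆ M') (h : EFpmFor M v A u w i) (h' : EFpmFor M' v A' u' w' i) :
    EFpmFor (M ∪ M') v (fun j => A j ∪ A' j) (u + u') (w + w') i := by
  intro j
  obtain ⟨S, T, hSM, hSA, hSu, hTA, hTw, hle⟩ := h j
  obtain ⟨S', T', hSM', hSA', hSu', hTA', hTw', hle'⟩ := h' j
  have hS : Disjoint (S ∪ S') (A i ∪ A' i) :=
    disjoint_union_left.2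
      ⟨disjoint_union_right.2 ⟨hSA, hM.mono hSM (hA' i)⟩,
        disjoint_union_right.2 ⟨(hM.mono (hA i) hSM').symm, hSA'⟩⟩
  have hreceived : Disjoint (A i ∪ S) (A' i ∪ S') :=
    hM.mono (union_subset (hA i) hSM) (union_subset (hA' i) hSM')
  have henvied : Disjoint (A j) (A' j) := hM.mono (hA j) (hA' j)
  refine ⟨S ∪ S', T ∪ T', union_subset_union hSM hSM', hS,
    (card_union_le S S').trans (add_le_add hSu hSu'), union_subset_union hTA hTA',
    (card_union_le T T').trans (add_le_add hTw hTw'), ?_⟩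
  calc ∑ g ∈ (A j ∪ A' j) \ (T ∪ T'), v i g
      = ∑ g ∈ A j \ T, v i g + ∑ g ∈ A' j \ T', v i g := by
        rw [union_sdiff_union_of_disjoint (henvied.mono_right hTA') (henvied.symm.mono_right hTA),
          sum_union (henvied.mono sdiff_subset sdiff_subset)]
    _ ≤ ∑ g ∈ A i ∪ S, v i g + ∑ g ∈ A' i ∪ S', v i g := add_le_add hle hle'
    _ = ∑ g ∈ (A i ∪ A' i) ∪ (S ∪ S'), v i g := by
        rw [union_union_union_comm, sum_union hreceived]

theorem efpmFor_zero_zero_iff :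
    EFpmFor M v A 0 0 i ↔ ∀ j, ∑ g ∈ A j, v i g ≤ ∑ g ∈ A i, v i g := by
  simp [EFpmFor]

theorem subset_union_fin_three (B : Fin 3 → Finset ι) (j : Fin 3) : B j ⊆ B 0 ∪ B 1 ∪ B 2 := by
  fin_cases j <;> grind

theorem combine_allocations_EF11_general (u w : ℕ) (hM : Disjoint M M') (hA : ∀ j, A j ⊆ M)
    (hA' : ∀ j, A' j ⊆ M') :
    ((EFpm M v A 0 w ∧ EFpm M' v A' u 0) → EFpm (M ∪ M') v (fun j => A j ∪ A' j) u w) ∧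
    (((∀ i j, ∑ g ∈ A j, v i g ≤ ∑ g ∈ A i, v i g) ∧ EFpm M' v A' u w) →
      EFpm (M ∪ M') v (fun j => A j ∪ A' j) u w) ∧
    (∀ i, ((EFpmFor M v A 0 w i ∧ EFpmFor M' v A' u 0 i) ∨
        ((∀ j, ∑ g ∈ A j, v i g ≤ ∑ g ∈ A i, v i g) ∧ EFpmFor M' v A' u w i)) →
      EFpmFor (M ∪ M') v (fun j => A j ∪ A' j) u w i) := by
  have agentwise : ∀ i, ((EFpmFor M v A 0 w i ∧ EFpmFor M' v A' u 0 i) ∨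
      ((∀ j, ∑ g ∈ A j, v i g ≤ ∑ g ∈ A i, v i g) ∧ EFpmFor M' v A' u w i)) →
      EFpmFor (M ∪ M') v (fun j => A j ∪ A' j) u w i := by
    rintro i (⟨h, h'⟩ | ⟨henvyFree, h'⟩)
    · simpa only [zero_add, add_zero] using h.union hM hA hA' h'
    · simpa only [zero_add] using (efpmFor_zero_zero_iff.2 henvyFree).union hM hA hA' h'
  exact ⟨fun ⟨h, h'⟩ i => agentwise i (.inl ⟨h i, h' i⟩),
    fun ⟨henvyFree, h'⟩ i => agentwise i (.inr ⟨henvyFree i, h' i⟩), agentwise⟩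

end

/-- Combining an allocation `A` of a set of items with an allocation `A'` of a disjoint set
of items (three agents): if `A` is EF1 and `A'` is EF^{+1}_{-0}, or `A` is envy-free and
`A'` is EF^{+1}_{-1}, the combined allocation is EF^{+1}_{-1}; and likewise for any single
agent `i` for whom one of the two conditions holds. -/
theorem combine_allocations_EF11 {ι : Type*} [DecidableEq ι]
    (v : Fin 3 → ι → ℝ) (hv : ∀ i g, 0 ≤ v i g)
    (A A' : Fin 3 → Finset ι)
    (hAdisj : ∀ i j, i ≠ j → Disjoint (A i) (A j))
    (hA'disj : ∀ i j, i ≠ j → Disjoint (A' i) (A' j))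
    (hdisj : ∀ i j, Disjoint (A i) (A' j)) :
    ((EFpm (A 0 ∪ A 1 ∪ A 2) v A 0 1 ∧ EFpm (A' 0 ∪ A' 1 ∪ A' 2) v A' 1 0) →
      EFpm ((A 0 ∪ A 1 ∪ A 2) ∪ (A' 0 ∪ A' 1 ∪ A' 2)) v (fun i => A i ∪ A' i) 1 1) ∧
    (((∀ i j : Fin 3, ∑ g ∈ A j, v i g ≤ ∑ g ∈ A i, v i g) ∧
        EFpm (A' 0 ∪ A' 1 ∪ A' 2) v A' 1 1) →
      EFpm ((A 0 ∪ A 1 ∪ A 2) ∪ (A' 0 ∪ A' 1 ∪ A' 2)) v (fun i => A i ∪ A' i) 1 1) ∧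
    (∀ i : Fin 3,
      ((EFpmFor (A 0 ∪ A 1 ∪ A 2) v A 0 1 i ∧ EFpmFor (A' 0 ∪ A' 1 ∪ A' 2) v A' 1 0 i) ∨
        ((∀ j : Fin 3, ∑ g ∈ A j, v i g ≤ ∑ g ∈ A i, v i g) ∧
          EFpmFor (A' 0 ∪ A' 1 ∪ A' 2) v A' 1 1 i)) →
      EFpmFor ((A 0 ∪ A 1 ∪ A 2) ∪ (A' 0 ∪ A' 1 ∪ A' 2)) v (fun i => A i ∪ A' i) 1 1 i) :=
  combine_allocations_EF11_general 1 1 (by simp [disjoint_union_left, hdisj])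
    (subset_union_fin_three A) (subset_union_fin_three A')
end

section
/- For any n agents with additive valuations over a finite set M of indivisible items, there exists a finite probability distribution over allocations, each of which is EF^{+(n-1)^2}_{-(n-1)}, under which every item is allocated to every agent with probability exactly 1/n; that is, the equal-division fractional allocation is EF^{+(n-1)^2}_{-(n-1)}-realizable. -/
open Finset

/-!
First divide the items fractionally into `n` parts, so that every agent values all parts equally.
For `m` items this imposes `m` normalisation equations and `n (n - 1)` further ones, so a basic
feasible solution has at most `m + n (n - 1)` nonzero entries; as each split item accounts for at
least two of them, at most `n (n - 1)` items are split. Handing out the split items with at most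
`n - 1` going to each part gives `n` bundles that all agents find equal up to these items. Hence the
bundles may be matched with the agents in any way, and the `n` cyclic rotations of one matching give
every item to every agent exactly once.
-/

section ConicCaratheodory

variable {𝕜 J E : Type*} [Field 𝕜] [LinearOrder 𝕜] [IsStrictOrderedRing 𝕜]

lemma exists_nonneg_add_smul_support_ssubset [Finite J] {x d : J → 𝕜} (hx : 0 ≤ x) (hd : d ≠ 0)
    (hsupp : Function.support d ⊆ Function.support x) :
    ∃ t : 𝕜, 0 ≤ x + t • d ∧ Function.support (x + t • d) ⊂ Function.support x := by
  wlog hneg : ∃ j, d j < 0 generalizing d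
  · obtain ⟨j, hj⟩ := Function.ne_iff.1 hd
    have hpos : 0 < d j := lt_of_le_of_ne (not_lt.1 fun h => hneg ⟨j, h⟩) (Ne.symm hj)
    obtain ⟨t, ht⟩ :=
      this (neg_ne_zero.2 hd) (by rwa [Function.support_neg]) ⟨j, neg_lt_zero.2 hpos⟩
    exact ⟨-t, by simpa using ht⟩
  -- The ratio test: move along `d` until the first coordinate vanishes.
  obtain ⟨j, hj, hmin⟩ :=
    (Set.toFinite {j | d j < 0}).exists_minimalFor (fun j => x j / -d j) _ hneg
  have hdj : 0 < -d j := neg_pos.2 hj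
  have hratio : 0 ≤ x j / -d j := div_nonneg (hx j) hdj.le
  refine ⟨x j / -d j, fun i => ?_, Set.ssubset_iff_exists.2 ⟨fun i hi hxi => hi ?_, j, ?_, ?_⟩⟩
  · rcases lt_or_ge (d i) 0 with hi | hi
    · have hle : x j / -d j ≤ x i / -d i := (le_total _ _).elim id (hmin hi)
      have hmul : x j / -d j * -d i ≤ x i := (le_div_iff₀ (neg_pos.2 hi)).1 hle
      simp only [Pi.zero_apply, Pi.add_apply, Pi.smul_apply, smul_eq_mul]
      linarith
    · exact add_nonneg (hx i) (mul_nonneg hratio hi)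
  · have hdi : d i = 0 := by_contra fun h => hsupp h hxi
    simp [hxi, hdi]
  · exact hsupp hj.ne
  · have hdj₀ : d j ≠ 0 := hj.ne
    simp only [Function.mem_support, Pi.add_apply, Pi.smul_apply, smul_eq_mul, not_not]
    field_simp
    ring

variable [Fintype J] [AddCommGroup E] [Module 𝕜 E]

lemma exists_nonneg_linearIndepOn_support (a : J → E) {x : J → 𝕜} (hx : 0 ≤ x) :
    ∃ y : J → 𝕜, 0 ≤ y ∧ ∑ j, y j • a j = ∑ j, x j • a j ∧
      LinearIndepOn 𝕜 a (Function.support y) := by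
  classical
  induction hs : Function.support x using WellFoundedLT.induction generalizing x with
  | ind s ih =>
    subst hs
    by_cases hind : LinearIndepOn 𝕜 a (Function.support x)
    · exact ⟨x, hx, rfl, hind⟩
    obtain ⟨d, hsupp, hrel, hd⟩ : ∃ d : J → 𝕜, Function.support d ⊆ Function.support x ∧
        ∑ j, d j • a j = 0 ∧ d ≠ 0 := by
      have hind' : ¬ LinearIndepOn 𝕜 a ↑({j | x j ≠ 0} : Finset J) := by
        simpa [Function.support] using hind
      obtain ⟨f, hf, j, hj, hfj⟩ := not_linearIndepOn_finset_iff.1 hind'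
      refine ⟨fun j => if x j ≠ 0 then f j else 0, fun j hj => ?_, ?_, ?_⟩
      · exact fun hxj => hj (if_neg (not_not.2 hxj))
      · simpa only [sum_filter, ite_smul, zero_smul] using hf
      · exact Function.ne_iff.2 ⟨j, by simpa [(mem_filter.1 hj).2] using hfj⟩
    obtain ⟨t, hnonneg, hlt⟩ := exists_nonneg_add_smul_support_ssubset hx hd hsupp
    obtain ⟨y, hy, hsum, hyind⟩ := ih _ hlt hnonneg rfl
    refine ⟨y, hy, hsum.trans ?_, hyind⟩
    simp [add_smul, sum_add_distrib, mul_smul, ← smul_sum, hrel]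

lemma exists_nonneg_card_support_le_finrank [Module.Finite 𝕜 E] (L : (J → 𝕜) →ₗ[𝕜] E)
    {x : J → 𝕜} (hx : 0 ≤ x) :
    ∃ y : J → 𝕜, 0 ≤ y ∧ L y = L x ∧ #{j | y j ≠ 0} ≤ Module.finrank 𝕜 E := by
  classical
  obtain ⟨y, hy, hsum, hind⟩ :=
    exists_nonneg_linearIndepOn_support (fun j => L fun i => if j = i then 1 else 0) hx
  refine ⟨y, hy, by simpa only [← LinearMap.pi_apply_eq_sum_univ] using hsum, ?_⟩
  simpa [Fintype.card_subtype] using hind.fintype_card_le_finrank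

end ConicCaratheodory

section SplitItems

variable {R ι κ : Type*} [Fintype ι] [Fintype κ]

/-- The items that the fractional division `x` does not give entirely to one part. -/
def splitItems [One R] [DecidableEq R] (x : ι → κ → R) : Finset ι := {g | ∀ k, x g k ≠ 1}

lemma one_lt_card_support_of_sum_eq_one [Semiring R] [Nontrivial R] [DecidableEq R]
    {f : κ → R} (hsum : ∑ k, f k = 1) (hf : ∀ k, f k ≠ 1) : 1 < #{k | f k ≠ 0} := by
  rw [← sum_filter_ne_zero] at hsum
  by_contra! hcard
  have hpos : 0 < #{k | f k ≠ 0} := by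
    refine card_pos.2 (nonempty_of_sum_ne_zero (f := f) ?_)
    rw [hsum]
    exact one_ne_zero
  obtain ⟨k, hk⟩ := card_eq_one.1 (hcard.antisymm hpos)
  exact hf k (by simpa [hk] using hsum)

lemma card_add_card_splitItems_le [Semiring R] [Nontrivial R] [DecidableEq R]
    {x : ι → κ → R} (hx : ∀ g, ∑ k, x g k = 1) :
    Fintype.card ι + #(splitItems x) ≤ #{p : ι × κ | x p.1 p.2 ≠ 0} := by
  classical
  have hrow (g : ι) : 1 + (if g ∈ splitItems x then 1 else 0) ≤ #{k | x g k ≠ 0} := by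
    split_ifs with hg
    · exact one_lt_card_support_of_sum_eq_one (hx g) ((mem_filter.1 hg).2)
    · obtain ⟨k, hk⟩ : ∃ k, x g k = 1 := by simpa [splitItems] using hg
      exact card_pos.2 ⟨k, by simp [hk]⟩
  calc Fintype.card ι + #(splitItems x)
      = ∑ g, (1 + if g ∈ splitItems x then 1 else 0) := by simp [sum_add_distrib]
    _ ≤ ∑ g, #{k | x g k ≠ 0} := sum_le_sum fun g _ => hrow g
    _ = #{p : ι × κ | x p.1 p.2 ≠ 0} := by simp only [card_filter, Fintype.sum_prod_type]

end SplitItems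

section ConsensusDivision

variable {R α ι κ : Type*} [Fintype ι] [Fintype κ]

/-- A fractional consensus division: `x g k` is the fraction of item `g` that goes to part `k`, and
all parts have the same value for each of the valuations `v i`. -/
structure IsConsensusDivision [Semiring R] [PartialOrder R] (v : α → ι → R) (x : ι → κ → R) :
    Prop where
  mem_stdSimplex : ∀ g, x g ∈ stdSimplex R κ
  value_eq : ∀ i k l, ∑ g, v i g * x g k = ∑ g, v i g * x g l

/-- The linear system behind consensus divisions: the total fraction of each item, and for each
valuation the difference in value between each part and the reference part `k₀`. -/
def consensusMap [CommRing R] (v : α → ι → R) (k₀ : κ) :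
    (ι × κ → R) →ₗ[R] (ι → R) × (α × {k // k ≠ k₀} → R) :=
  let entry (g : ι) (k : κ) : (ι × κ → R) →ₗ[R] R := LinearMap.proj (g, k)
  (LinearMap.pi fun g => ∑ k, entry g k).prod
    (LinearMap.pi fun p => ∑ g, v p.1 g • (entry g p.2 - entry g k₀))

lemma exists_isConsensusDivision_card_splitItems_le [Field R] [LinearOrder R]
    [IsStrictOrderedRing R] [Fintype α] [Nonempty κ] (v : α → ι → R) :
    ∃ x : ι → κ → R, IsConsensusDivision v x ∧
      #(splitItems x) ≤ Fintype.card α * (Fintype.card κ - 1) := by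
  classical
  let k₀ := Classical.arbitrary κ
  have huniform : (0 : ι × κ → R) ≤ fun _ => (Fintype.card κ : R)⁻¹ := fun _ => by positivity
  obtain ⟨y, hy, hL, hcard⟩ := exists_nonneg_card_support_le_finrank (consensusMap v k₀) huniform
  obtain ⟨hsum, hvalue⟩ := Prod.ext_iff.1 hL
  have hrow (g : ι) : ∑ k, y (g, k) = 1 := by
    simpa [consensusMap] using congrFun hsum g
  have hk₀ (i : α) (k : κ) : ∑ g, v i g * y (g, k) = ∑ g, v i g * y (g, k₀) := by
    by_cases hk : k = k₀
    · rw [hk]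
    · simpa [consensusMap, mul_sub, sub_eq_zero] using congrFun hvalue (i, ⟨k, hk⟩)
  refine ⟨fun g k => y (g, k), ⟨fun g => ⟨fun k => hy _, hrow g⟩, fun i k l => ?_⟩, ?_⟩
  · rw [hk₀ i k, hk₀ i l]
  · have hle := (card_add_card_splitItems_le hrow).trans hcard
    simpa [Fintype.card_subtype_compl] using hle

end ConsensusDivision

lemma eq_zero_of_mem_stdSimplex {R κ : Type*} [Ring R] [PartialOrder R] [IsOrderedRing R]
    [Fintype κ] {f : κ → R} (hf : f ∈ stdSimplex R κ) {k l : κ} (hk : f k = 1)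
    (hkl : k ≠ l) : f l = 0 := by
  classical
  have hle : f k + f l ≤ ∑ i, f i := by
    rw [← sum_pair hkl]
    exact sum_le_univ_sum_of_nonneg hf.1
  exact le_antisymm (by simpa [hk, hf.2] using hle) (hf.1 l)

section Rounding

variable {ι κ : Type*} [Fintype κ] [DecidableEq κ]

lemma exists_eqOn_compl_card_fiber_le (a : ι → κ) {F : Finset ι} {w : ℕ}
    (hF : #F ≤ Fintype.card κ * w) :
    ∃ c : ι → κ, (∀ g ∉ F, c g = a g) ∧ ∀ k, #{g ∈ F | c g = k} ≤ w := by
  classical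
  obtain ⟨φ⟩ : Nonempty (F ↪ κ × Fin w) :=
    Function.Embedding.nonempty_of_card_le (by simpa using hF)
  refine ⟨fun g => if h : g ∈ F then (φ ⟨g, h⟩).1 else a g, fun g hg => dif_neg hg, fun k => ?_⟩
  calc #{g ∈ F | (if h : g ∈ F then (φ ⟨g, h⟩).1 else a g) = k}
      = #{g : F | (φ g).1 = k} := by
        rw [← card_map (Function.Embedding.subtype _)]
        congr 1
        ext g
        by_cases hg : g ∈ F <;> simp [hg]
    _ ≤ #(({k} : Finset κ) ×ˢ (univ : Finset (Fin w))) :=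
        card_le_card_of_injOn φ
          (fun g hg => mem_product.2 ⟨mem_singleton.2 (mem_filter.1 hg).2, mem_univ _⟩)
          φ.injective.injOn
    _ = w := by simp

lemma card_filter_ne_le {c : ι → κ} {F : Finset ι} {w : ℕ}
    (hw : ∀ k, #{g ∈ F | c g = k} ≤ w) (k : κ) :
    #{g ∈ F | c g ≠ k} ≤ (Fintype.card κ - 1) * w := by
  have hmaps : ∀ g ∈ ({g ∈ F | c g ≠ k} : Finset ι), c g ∈ univ.erase k := fun g hg =>
    mem_erase.2 ⟨(mem_filter.1 hg).2, mem_univ _⟩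
  have hle := card_le_mul_card_image_of_maps_to hmaps w fun l _ =>
    (card_le_card (filter_subset_filter _ (filter_subset _ F))).trans (hw l)
  rwa [card_erase_of_mem (mem_univ k), card_univ, mul_comm] at hle

end Rounding

section FiberValue

variable {R ι κ : Type*} [Ring R] [PartialOrder R] [IsOrderedRing R] [Fintype ι] [DecidableEq ι]
  [DecidableEq κ] {u : ι → R} {x : ι → κ → R} {c : ι → κ} {F : Finset ι}

lemma sum_fiber_sdiff_le_sum_mul (hu : 0 ≤ u) (hx : 0 ≤ x) (hc : ∀ g ∉ F, x g (c g) = 1) (k : κ) :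
    ∑ g ∈ ({g | c g = k} : Finset ι) \ F, u g ≤ ∑ g, u g * x g k := by
  calc ∑ g ∈ ({g | c g = k} : Finset ι) \ F, u g
      = ∑ g ∈ ({g | c g = k} : Finset ι) \ F, u g * x g k := by
        refine sum_congr rfl fun g hg => ?_
        obtain ⟨rfl, hgF⟩ : c g = k ∧ g ∉ F := by simpa using hg
        rw [hc g hgF, mul_one]
    _ ≤ ∑ g, u g * x g k :=
        sum_le_univ_sum_of_nonneg fun g => mul_nonneg (hu g) (hx g k)

lemma sum_mul_le_sum_fiber_union [Fintype κ] (hu : 0 ≤ u) (hx : ∀ g, x g ∈ stdSimplex R κ)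
    (hc : ∀ g ∉ F, x g (c g) = 1) (k : κ) :
    ∑ g, u g * x g k ≤ ∑ g ∈ ({g | c g = k} : Finset ι) ∪ F, u g := by
  calc ∑ g, u g * x g k
      = ∑ g ∈ ({g | c g = k} : Finset ι) ∪ F, u g * x g k := by
        refine (sum_subset (subset_univ _) fun g _ hg => ?_).symm
        obtain ⟨hgk, hgF⟩ : c g ≠ k ∧ g ∉ F := by simpa using hg
        rw [eq_zero_of_mem_stdSimplex (hx g) (hc g hgF) hgk, mul_zero]
    _ ≤ ∑ g ∈ ({g | c g = k} : Finset ι) ∪ F, u g :=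
        sum_le_sum fun g _ =>
          mul_le_of_le_one_right (hu g) (mem_Icc_of_mem_stdSimplex (hx g) k).2

end FiberValue

lemma exists_fiber_sdiff_le_fiber_union {𝕜 α ι κ : Type*} [Field 𝕜] [LinearOrder 𝕜]
    [IsStrictOrderedRing 𝕜] [Fintype α] [Fintype ι] [DecidableEq ι] [Fintype κ] [DecidableEq κ]
    [Nonempty κ] {v : α → ι → 𝕜} (hv : 0 ≤ v) {w : ℕ}
    (hw : Fintype.card α * (Fintype.card κ - 1) ≤ Fintype.card κ * w) :
    ∃ (c : ι → κ) (F : Finset ι), (∀ k, #{g ∈ F | c g = k} ≤ w) ∧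
      ∀ i k l, ∑ g ∈ ({g | c g = k} : Finset ι) \ F, v i g ≤
        ∑ g ∈ ({g | c g = l} : Finset ι) ∪ F, v i g := by
  obtain ⟨x, hx, hcard⟩ := exists_isConsensusDivision_card_splitItems_le (κ := κ) v
  have hwhole (g : ι) : ∃ k, g ∉ splitItems x → x g k = 1 := by
    by_cases hg : g ∈ splitItems x
    · exact ⟨Classical.arbitrary κ, absurd hg⟩
    · obtain ⟨k, hk⟩ : ∃ k, x g k = 1 := by simpa [splitItems] using hg
      exact ⟨k, fun _ => hk⟩
  choose a ha using hwhole
  obtain ⟨c, hca, hcw⟩ := exists_eqOn_compl_card_fiber_le a (hcard.trans hw)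
  have hc (g : ι) (hg : g ∉ splitItems x) : x g (c g) = 1 := by rw [hca g hg, ha g hg]
  refine ⟨c, splitItems x, hcw, fun i k l => ?_⟩
  calc ∑ g ∈ ({g | c g = k} : Finset ι) \ splitItems x, v i g
      ≤ ∑ g, v i g * x g k :=
        sum_fiber_sdiff_le_sum_mul (hv i) (fun g => (hx.mem_stdSimplex g).1) hc k
    _ = ∑ g, v i g * x g l := hx.value_eq i k l
    _ ≤ ∑ g ∈ ({g | c g = l} : Finset ι) ∪ splitItems x, v i g :=
        sum_mul_le_sum_fiber_union (hv i) hx.mem_stdSimplex hc l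

section Allocation

variable {ι κ : Type*} [DecidableEq ι] {n : ℕ}

lemma isPartition_fiber [Fintype ι] [DecidableEq κ] (c : ι → κ) (σ : Fin n ≃ κ) :
    IsPartition univ fun i => ({g | c g = σ i} : Finset ι) := by
  refine ⟨fun _ => subset_univ _, fun i j hij => ?_, fun g _ => ⟨σ.symm (c g), by simp⟩⟩
  exact disjoint_filter.2 fun g _ hi hj => hij (σ.injective (hi.symm.trans hj))

lemma EFpm.of_sdiff_le_union {M F : Finset ι} {v : Fin n → ι → ℝ} {A : Fin n → Finset ι} {u w : ℕ}
    (hFM : F ⊆ M) (hu : ∀ i, #(F \ A i) ≤ u) (hw : ∀ j, #(A j ∩ F) ≤ w)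
    (hle : ∀ i j, ∑ g ∈ A j \ F, v i g ≤ ∑ g ∈ A i ∪ F, v i g) : EFpm M v A u w := fun i j =>
  ⟨F \ A i, A j ∩ F, sdiff_subset.trans hFM, sdiff_disjoint, hu i, inter_subset_left, hw j,
    by simpa using hle i j⟩

lemma exists_bundling_forall_EFpm [NeZero n] [Fintype ι] {v : Fin n → ι → ℝ} (hv : 0 ≤ v) :
    ∃ c : ι → Fin n, ∀ σ : Fin n → Fin n,
      EFpm univ v (fun i => {g | c g = σ i}) ((n - 1) ^ 2) (n - 1) := by
  obtain ⟨c, F, hw, hle⟩ :=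
    exists_fiber_sdiff_le_fiber_union (κ := Fin n) (w := n - 1) hv (by simp)
  refine ⟨c, fun σ => .of_sdiff_le_union (subset_univ F) (fun i => ?_) (fun j => ?_)
    fun i j => hle i (σ j) (σ i)⟩
  · simpa [sdiff_eq_filter, sq] using card_filter_ne_le hw (σ i)
  · simpa [filter_inter] using hw (σ j)

theorem equal_division_EFpm_realizable_general [NeZero n] [Fintype ι] {v : Fin n → ι → ℝ}
    (hv : 0 ≤ v) :
    ∃ A : Fin n → Fin n → Finset ι, (∀ t, IsPartition univ (A t)) ∧
      (∀ t, EFpm univ v (A t) ((n - 1) ^ 2) (n - 1)) ∧ ∀ i g, #{t | g ∈ A t i} = 1 := by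
  obtain ⟨c, hc⟩ := exists_bundling_forall_EFpm hv
  refine ⟨fun t i => {g | c g = i + t}, fun t => isPartition_fiber c (Equiv.addRight t),
    fun t => hc (· + t), fun i g => card_eq_one.2 ⟨c g - i, ?_⟩⟩
  ext t
  simp [eq_sub_iff_add_eq', eq_comm]

end Allocation

/-- For any `n` agents with additive valuations, the equal-division fractional allocation is
EF^{+(n-1)²}_{-(n-1)}-realizable: some finite distribution over EF^{+(n-1)²}_{-(n-1)}
allocations gives every item to every agent with probability exactly `1/n`. -/
theorem equal_division_EFpm_realizable (n m : ℕ) (hn : 1 ≤ n)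
    (v : Fin n → Fin m → ℝ) (hv : ∀ i g, 0 ≤ v i g) :
    ∃ (K : ℕ) (p : Fin K → ℝ) (A : Fin K → Fin n → Finset (Fin m)),
      (∀ k, 0 ≤ p k) ∧ (∑ k, p k = 1) ∧
      (∀ k, IsPartition Finset.univ (A k)) ∧
      (∀ k, EFpm Finset.univ v (A k) ((n - 1) ^ 2) (n - 1)) ∧
      (∀ i g, ∑ k, (if g ∈ A k i then p k else 0) = 1 / n) := by
  have : NeZero n := ⟨by omega⟩
  obtain ⟨A, hpart, hEF, hcard⟩ := equal_division_EFpm_realizable_general hv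
  exact ⟨n, fun _ => 1 / n, A, fun _ => by positivity, by simp [NeZero.ne n], hpart, hEF,
    fun i g => by simp [← sum_filter, hcard]⟩
end

section
/- Given n agents with additive valuations v_1,…,v_n over a finite set M of m items, there exists a fractional partition (x_{jg}) for j ∈ {1,…,n} and g ∈ M with 0 ≤ x_{jg} ≤ 1 and ∑_{j=1}^n x_{jg} = 1 for every item g, such that ∑_{g ∈ M} v_i(g)·x_{jg} = v_i(M)/n for every pair of indices i, j ∈ {1,…,n}, and the number of items g for which some x_{jg} lies strictly between 0 and 1 is at most n(n-1). -/
open Finset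

/-!
An integral choice of a share for each item is a choice of a vertex of the standard simplex, so the
theorem is an instance of the Shapley–Folkman lemma: a sum of convex combinations in a
`d`-dimensional space can be rewritten with at most `d` of the combinations non-trivial. Attaching
to each point the indicator of its index turns the convex combinations into one conic combination
in dimension `|ι| + d`; Carathéodory's theorem for cones bounds its support by `|ι| + d`, and each
index takes up one element of the support, or at least two if its combination is non-trivial.

For partitions into shares of prescribed values, the value of one share follows from those of the
others, since the shares add up to the whole; hence `d = n (n - 1)`.
-/

section Caratheodory

variable {𝕜 E α : Type*} [Field 𝕜] [LinearOrder 𝕜] [IsStrictOrderedRing 𝕜]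
  [AddCommGroup E] [Module 𝕜 E]

theorem exists_nonneg_sub_smul_support_ssubset {c l : α →₀ 𝕜} (hc : 0 ≤ c)
    (hl : l.support ⊆ c.support) (hpos : ∃ a, 0 < l a) :
    ∃ t : 𝕜, 0 ≤ c - t • l ∧ (c - t • l).support ⊂ c.support := by
  have hne : {a ∈ l.support | 0 < l a}.Nonempty :=
    hpos.imp fun a ha ↦ by simp [ha, ha.ne']
  -- The first coefficient of `c - t • l` to vanish as `t` increases from `0`.
  obtain ⟨b, hb, hmin⟩ := exists_min_image _ (fun a ↦ c a / l a) hne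
  obtain ⟨hbl, hb⟩ := mem_filter.1 hb
  have hvanish : (c - (c b / l b) • l) b = 0 := by simp [hb.ne']
  refine ⟨c b / l b, fun a ↦ ?_, ?_⟩
  · simp only [Finsupp.coe_zero, Pi.zero_apply, Finsupp.sub_apply, Finsupp.smul_apply,
      smul_eq_mul, sub_nonneg]
    rcases lt_or_ge 0 (l a) with ha | ha
    · exact (le_div_iff₀ ha).1 (hmin a (by simp [ha, ha.ne']))
    · exact (mul_nonpos_of_nonneg_of_nonpos (div_nonneg (hc b) hb.le) ha).trans (hc a)
  · refine (ssubset_iff_of_subset fun a ↦ not_imp_not.1 fun hca ↦ ?_).2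
      ⟨b, hl hbl, by simp [hvanish]⟩
    have hla : a ∉ l.support := fun h ↦ hca (hl h)
    rw [Finsupp.notMem_support_iff] at hca hla ⊢
    simp [hca, hla]

theorem exists_support_ssubset_of_not_linearIndepOn {e : α → E} {c : α →₀ 𝕜} (hc : 0 ≤ c)
    (he : ¬ LinearIndepOn 𝕜 e (c.support : Set α)) :
    ∃ d : α →₀ 𝕜, 0 ≤ d ∧
      Finsupp.linearCombination 𝕜 e d = Finsupp.linearCombination 𝕜 e c ∧
      d.support ⊂ c.support := by
  obtain ⟨l, hl, hl0, hne⟩ : ∃ l : α →₀ 𝕜, l.support ⊆ c.support ∧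
      Finsupp.linearCombination 𝕜 e l = 0 ∧ l ≠ 0 := by
    simpa [linearIndepOn_iff, Finsupp.mem_supported] using he
  wlog hpos : ∃ a, 0 < l a generalizing l
  · refine this (-l) (by simpa using hl) (by simp [hl0]) (by simpa using hne) ?_
    obtain ⟨a, ha⟩ := DFunLike.ne_iff.1 hne
    push Not at hpos
    exact ⟨a, by simpa using (hpos a).lt_of_ne ha⟩
  obtain ⟨t, ht, hss⟩ := exists_nonneg_sub_smul_support_ssubset hc hl hpos
  exact ⟨c - t • l, ht, by simp [hl0], hss⟩

/-- **Carathéodory's theorem** for convex cones. -/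
theorem exists_nonneg_linearIndepOn_support_s11 (e : α → E) {c : α →₀ 𝕜} (hc : 0 ≤ c) :
    ∃ d : α →₀ 𝕜, 0 ≤ d ∧
      Finsupp.linearCombination 𝕜 e d = Finsupp.linearCombination 𝕜 e c ∧
      LinearIndepOn 𝕜 e (d.support : Set α) := by
  induction hs : c.support using Finset.strongInduction generalizing c with
  | H s ih =>
    by_cases he : LinearIndepOn 𝕜 e (c.support : Set α)
    · exact ⟨c, hc, rfl, he⟩
    obtain ⟨c', hc', hcomb, hss⟩ := exists_support_ssubset_of_not_linearIndepOn hc he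
    obtain ⟨d, hd, hd', hind⟩ := ih _ (hs ▸ hss) hc' rfl
    exact ⟨d, hd, hd'.trans hcomb, hind⟩

theorem exists_nonneg_card_support_le_finrank_s11 [FiniteDimensional 𝕜 E] (e : α → E) {c : α →₀ 𝕜}
    (hc : 0 ≤ c) :
    ∃ d : α →₀ 𝕜, 0 ≤ d ∧
      Finsupp.linearCombination 𝕜 e d = Finsupp.linearCombination 𝕜 e c ∧
      #d.support ≤ Module.finrank 𝕜 E := by
  obtain ⟨d, hd, hcomb, hind⟩ := exists_nonneg_linearIndepOn_support_s11 e hc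
  exact ⟨d, hd, hcomb, by simpa using LinearIndependent.fintype_card_le_finrank hind⟩

end Caratheodory

section SupportCount

variable {M ι σ : Type*} [AddCommMonoidWithOne M] [DecidableEq M] [Fintype ι] [Fintype σ]

theorem card_support_pos_of_sum_eq_one [NeZero (1 : M)] {p : σ → M} (hp : ∑ j, p j = 1) :
    0 < #{j | p j ≠ 0} := by
  obtain ⟨j, -, hj⟩ := exists_ne_zero_of_sum_ne_zero (hp.trans_ne one_ne_zero)
  exact card_pos.2 ⟨j, by simpa using hj⟩

theorem one_lt_card_support_of_sum_eq_one_s11 {p : σ → M} (hp : ∑ j, p j = 1) {j : σ}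
    (hj0 : p j ≠ 0) (hj1 : p j ≠ 1) : 1 < #{j | p j ≠ 0} := by
  by_contra! hle
  have huniq : ∀ k, k ≠ j → p k = 0 := fun k hkj ↦ by
    by_contra hk
    exact hkj (card_le_one.1 hle k (by simpa using hk) j (by simpa using hj0))
  exact hj1 (by rw [← Fintype.sum_eq_single j huniq, hp])

theorem card_add_ncard_le_card_support [NeZero (1 : M)] {x : ι → σ → M}
    (hx : ∀ g, ∑ j, x g j = 1) :
    Fintype.card ι + {g | ∃ j, x g j ≠ 0 ∧ x g j ≠ 1}.ncard ≤ #{p : ι × σ | x p.1 p.2 ≠ 0} := by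
  calc
    Fintype.card ι + {g | ∃ j, x g j ≠ 0 ∧ x g j ≠ 1}.ncard
      = ∑ g, (1 + if ∃ j, x g j ≠ 0 ∧ x g j ≠ 1 then 1 else 0) := by
        rw [sum_add_distrib, ← card_filter, ← Set.ncard_coe_finset]
        simp
    _ ≤ ∑ g, #{j | x g j ≠ 0} := by
        refine sum_le_sum fun g _ ↦ ?_
        split_ifs with h
        · obtain ⟨j, hj0, hj1⟩ := h
          exact one_lt_card_support_of_sum_eq_one_s11 (hx g) hj0 hj1
        · exact card_support_pos_of_sum_eq_one (hx g)
    _ = #{p : ι × σ | x p.1 p.2 ≠ 0} := by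
        simp only [card_filter, Fintype.sum_prod_type]

end SupportCount

section ShapleyFolkman

variable {𝕜 E ι σ : Type*} [Field 𝕜] [LinearOrder 𝕜] [IsStrictOrderedRing 𝕜]
  [AddCommGroup E] [Module 𝕜 E] [Fintype ι] [Fintype σ]

/-- **Shapley–Folkman lemma** for finite families of points. -/
theorem exists_stdSimplex_ncard_ne_vertex_le_finrank [FiniteDimensional 𝕜 E]
    (e : ι → σ → E) {y : ι → σ → 𝕜} (hy : ∀ g, y g ∈ stdSimplex 𝕜 σ) :
    ∃ x : ι → σ → 𝕜, (∀ g, x g ∈ stdSimplex 𝕜 σ) ∧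
      ∑ g, ∑ j, x g j • e g j = ∑ g, ∑ j, y g j • e g j ∧
      {g | ∃ j, x g j ≠ 0 ∧ x g j ≠ 1}.ncard ≤ Module.finrank 𝕜 E := by
  classical
  let lift : ι × σ → (ι → 𝕜) × E := fun p ↦ (Pi.single p.1 1, e p.1 p.2)
  have lift_comb (d : ι × σ →₀ 𝕜) : Finsupp.linearCombination 𝕜 lift d =
      (fun g ↦ ∑ j, d (g, j), ∑ g, ∑ j, d (g, j) • e g j) := by
    rw [Finsupp.linearCombination_apply, Finsupp.sum_fintype _ _ (by simp)]
    ext <;> simp [lift, Fintype.sum_prod_type, Prod.fst_sum, Prod.snd_sum, Pi.single_apply]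
  obtain ⟨d, hd, hcomb, hcard⟩ := exists_nonneg_card_support_le_finrank_s11 lift
    (c := Finsupp.equivFunOnFinite.symm fun p ↦ y p.1 p.2) fun p ↦ (hy p.1).1 p.2
  obtain ⟨hsum, hvalue⟩ := Prod.ext_iff.1 ((lift_comb d).symm.trans (hcomb.trans (lift_comb _)))
  have hx (g : ι) : (fun j ↦ d (g, j)) ∈ stdSimplex 𝕜 σ :=
    ⟨fun j ↦ hd (g, j), (congrFun hsum g).trans (hy g).2⟩
  refine ⟨fun g j ↦ d (g, j), hx, hvalue, Nat.le_of_add_le_add_left (a := Fintype.card ι) ?_⟩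
  calc
    _ ≤ #{p : ι × σ | d (p.1, p.2) ≠ 0} := card_add_ncard_le_card_support fun g ↦ (hx g).2
    _ = #d.support := by congr 1; ext; simp
    _ ≤ Module.finrank 𝕜 ((ι → 𝕜) × E) := hcard
    _ = Fintype.card ι + Module.finrank 𝕜 E := by simp

end ShapleyFolkman

theorem eq_of_sum_eq_of_forall_ne {σ M : Type*} [Fintype σ] [AddCommMonoid M] [IsCancelAdd M]
    {f h : σ → M} (k : σ) (hsum : ∑ j, f j = ∑ j, h j) (hne : ∀ j, j ≠ k → f j = h j) :
    f = h := by
  classical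
  have hrest : ∑ j ∈ {k}ᶜ, f j = ∑ j ∈ {k}ᶜ, h j := sum_congr rfl (by simpa using hne)
  rw [Fintype.sum_eq_add_sum_compl k f, Fintype.sum_eq_add_sum_compl k h, hrest] at hsum
  funext j
  by_cases hj : j = k
  · exact hj ▸ add_right_cancel hsum
  · exact hne j hj

theorem exists_balanced_fractional_partition_general {𝕜 ι κ σ : Type*} [Field 𝕜] [LinearOrder 𝕜]
    [IsStrictOrderedRing 𝕜] [Fintype ι] [Fintype κ] [Fintype σ] (v : κ → ι → 𝕜) {w : σ → 𝕜}
    (hw : w ∈ stdSimplex 𝕜 σ) :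
    ∃ x : σ → ι → 𝕜,
      (∀ j g, 0 ≤ x j g ∧ x j g ≤ 1) ∧
      (∀ g, ∑ j, x j g = 1) ∧
      (∀ i j, ∑ g, v i g * x j g = (∑ g, v i g) * w j) ∧
      {g : ι | ∃ j, 0 < x j g ∧ x j g < 1}.ncard ≤ Fintype.card κ * (Fintype.card σ - 1) := by
  classical
  obtain ⟨k, -⟩ := exists_ne_zero_of_sum_ne_zero (hw.2.trans_ne one_ne_zero)
  let e : ι → σ → κ → {j // j ≠ k} → 𝕜 := fun g j i j' ↦ if j = j' then v i g else 0
  have e_comb (z : ι → σ → 𝕜) (i : κ) (j : {j // j ≠ k}) :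
      (∑ g, ∑ j, z g j • e g j) i j = ∑ g, v i g * z g j := by
    simp [e, Finset.sum_apply, mul_comm]
  obtain ⟨x, hx, hvalue, hcard⟩ :=
    exists_stdSimplex_ncard_ne_vertex_le_finrank e (y := fun _ ↦ w) fun _ ↦ hw
  refine ⟨fun j g ↦ x g j, fun j g ↦ mem_Icc_of_mem_stdSimplex (hx g) j, fun g ↦ (hx g).2,
    fun i ↦ congrFun (eq_of_sum_eq_of_forall_ne k ?_ fun j hj ↦ ?_), ?_⟩
  · rw [sum_comm]
    simp only [← mul_sum, (hx _).2, hw.2, mul_one]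
  · rw [← e_comb x i ⟨j, hj⟩, hvalue, e_comb, sum_mul]
  · calc
      {g | ∃ j, 0 < x g j ∧ x g j < 1}.ncard
        ≤ {g | ∃ j, x g j ≠ 0 ∧ x g j ≠ 1}.ncard :=
          Set.ncard_le_ncard fun g ⟨j, h0, h1⟩ ↦ ⟨j, h0.ne', h1.ne⟩
      _ ≤ Module.finrank 𝕜 (κ → {j // j ≠ k} → 𝕜) := hcard
      _ = Fintype.card κ * (Fintype.card σ - 1) := by
          simp [Module.finrank_pi_fintype, Fintype.card_subtype_compl]

/-- For `n ≥ 1` agents with additive valuations over a finite item set, there is a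
fractional partition of the items into `n` shares such that every agent values every share
exactly `1/n` of the total, and at most `n(n-1)` items are fractionally allocated. -/
theorem exists_balanced_fractional_partition {ι : Type*} [Fintype ι] [DecidableEq ι]
    (n : ℕ) (hn : 1 ≤ n) (v : Fin n → ι → ℝ) (hv : ∀ i g, 0 ≤ v i g) :
    ∃ x : Fin n → ι → ℝ,
      (∀ j g, 0 ≤ x j g ∧ x j g ≤ 1) ∧
      (∀ g, ∑ j, x j g = 1) ∧
      (∀ i j : Fin n, ∑ g, v i g * x j g = (∑ g, v i g) / n) ∧
      ({g : ι | ∃ j, 0 < x j g ∧ x j g < 1}.ncard ≤ n * (n - 1)) := by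
  have hw : (fun _ ↦ (n : ℝ)⁻¹) ∈ stdSimplex ℝ (Fin n) :=
    ⟨fun _ ↦ by positivity, by simp [Nat.one_le_iff_ne_zero.1 hn]⟩
  simpa [div_eq_mul_inv] using exists_balanced_fractional_partition_general v hw
end

section
/- For any n agents with additive valuations over a finite set M of indivisible items, there exists a finite probability distribution over allocations such that every allocation (A_1,…,A_n) in its support satisfies both PROP1 and v_i(A_i) ≥ (1/n)·MMS_i for every agent i, and under which every item is allocated to every agent with probability exactly 1/n. -/
open Finset

/-- The maximin share of an additive valuation `v` over `n` bundles: the maximum, over all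
ordered partitions of the items (encoded by assignments `f` of items to bundles), of the
minimum bundle value. -/
noncomputable def mms (n : ℕ) {m : ℕ} (v : Fin m → ℝ) : ℝ :=
  ⨆ f : Fin m → Fin n, ⨅ t : Fin n, ∑ g ∈ Finset.univ.filter (fun g => f g = t), v g

/-- The allocation `A` is PROP1 for agent `i`: either agent `i` already gets a proportional
share, or adding some single item `g ∉ A i` to her bundle yields at least `vᵢ(M)/n`. -/
def Prop1For {n m : ℕ} (v : Fin n → Fin m → ℝ) (A : Fin n → Finset (Fin m))
    (i : Fin n) : Prop :=
  ((∑ g', v i g') / n ≤ ∑ g ∈ A i, v i g) ∨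
    ∃ g, g ∉ A i ∧ (∑ g', v i g') / n ≤ ∑ g' ∈ insert g (A i), v i g'

/-!
Write `n` for the number of agents and pad the items with worthless ones until `n` divides their
number. Every agent ranks the items by decreasing value and cuts her ranking into blocks of `n`
consecutive items. The matrix whose rows are the pairs (block, agent), whose columns are the items
and which spreads the weight of each row evenly over its block is doubly stochastic, so Birkhoff's
theorem writes it as a lottery over bijections: every outcome gives each agent exactly one item
from each of her blocks, and every item goes to every agent with probability `1 / n`.

One item per block is enough for fairness, since an item of a block is worth at least as much as
any item of the next block. For PROP1, add the best item of the first block in which the agent does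
not get it. For the maximin share, some bundle of any partition avoids the `n - 1` best items, and
the remaining items can be charged `n` at a time to the items received.
-/

section Lottery

lemma not_of_sum_ite_eq_zero {R κ : Type*} [AddCommMonoid R] [PartialOrder R]
    [IsOrderedAddMonoid R] [Fintype κ] {p : κ → R} (hp : ∀ k, 0 < p k) {P : κ → Prop}
    [DecidablePred P] (h : ∑ k, (if P k then p k else 0) = 0) (k : κ) : ¬ P k := by
  intro hk
  have hnonneg (j : κ) : 0 ≤ if P j then p j else 0 := by
    split_ifs
    exacts [(hp j).le, le_rfl]
  have hzero := (sum_eq_zero_iff_of_nonneg fun j _ => hnonneg j).mp h k (mem_univ k)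
  exact (hp k).ne' (by simpa [hk] using hzero)

lemma symm_snd_eq_iff {ι τ X : Type*} {σ : τ × ι ≃ X} {b : X → τ} {i : ι}
    (hb : ∀ t, b (σ (t, i)) = t) {x : X} : (σ.symm x).2 = i ↔ σ (b x, i) = x := by
  obtain ⟨⟨t, j⟩, rfl⟩ := σ.surjective x
  constructor
  · intro h
    obtain rfl : j = i := by simpa using h
    rw [hb]
  · intro h
    rw [← h, Equiv.symm_apply_apply]

lemma bijOn_symm_snd_eq {ι τ X : Type*} {σ : τ × ι ≃ X} {b : X → τ} {i : ι}
    (hb : ∀ t, b (σ (t, i)) = t) : Set.BijOn b {x | (σ.symm x).2 = i} Set.univ := by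
  refine ⟨Set.mapsTo_univ _ _, fun x hx y hy hxy => ?_, fun t _ => ⟨σ (t, i), by simp, hb t⟩⟩
  rw [← (symm_snd_eq_iff hb).mp hx, ← (symm_snd_eq_iff hb).mp hy, hxy]

variable {R : Type*} [Field R] [LinearOrder R] [IsStrictOrderedRing R]

lemma exists_perm_lottery_of_mem_doublyStochastic {ρ : Type*} [Fintype ρ] [DecidableEq ρ]
    {M : Matrix ρ ρ R} (hM : M ∈ doublyStochastic R ρ) :
    ∃ (K : ℕ) (p : Fin K → R) (σ : Fin K → Equiv.Perm ρ),
      (∀ k, 0 < p k) ∧ ∑ k, p k = 1 ∧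
      ∀ r s, ∑ k, (if σ k r = s then p k else 0) = M r s := by
  obtain ⟨w, hw_nonneg, hw_sum, hw_eq⟩ := exists_eq_sum_perm_of_mem_doublyStochastic hM
  let S : Finset (Equiv.Perm ρ) := {σ | 0 < w σ}
  have sum_support (f : Equiv.Perm ρ → R) (hf : ∀ σ, w σ = 0 → f σ = 0) :
      ∑ k, f (S.equivFin.symm k) = ∑ σ, f σ := by
    rw [Equiv.sum_comp S.equivFin.symm (fun σ => f σ), sum_coe_sort S f]
    refine sum_filter_of_ne fun σ _ hσ => (hw_nonneg σ).lt_of_ne ?_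
    exact fun h => hσ (hf σ h.symm)
  refine ⟨#S, fun k => w (S.equivFin.symm k), fun k => S.equivFin.symm k,
    fun k => (mem_filter.mp (S.equivFin.symm k).2).2,
    (sum_support w fun _ h => h).trans hw_sum, fun r s => ?_⟩
  rw [sum_support (fun σ => if σ r = s then w σ else 0) fun σ h => by simp [h], ← hw_eq,
    Matrix.sum_apply]
  refine sum_congr rfl fun σ _ => ?_
  simp [Equiv.Perm.permMatrix, PEquiv.toMatrix_apply, eq_comm]

lemma exists_equiv_lottery_of_sums_eq_one {ρ X : Type*} [Fintype ρ] [Fintype X] [DecidableEq X]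
    {M : Matrix ρ X R} (hM : ∀ r x, 0 ≤ M r x) (hrow : ∀ r, ∑ x, M r x = 1)
    (hcol : ∀ x, ∑ r, M r x = 1) :
    ∃ (K : ℕ) (p : Fin K → R) (σ : Fin K → ρ ≃ X),
      (∀ k, 0 < p k) ∧ ∑ k, p k = 1 ∧
      ∀ r x, ∑ k, (if σ k r = x then p k else 0) = M r x := by
  classical
  have hcard : Fintype.card ρ = Fintype.card X := by
    have h := sum_comm (s := univ) (t := univ) (f := M)
    simpa [hrow, hcol] using h
  let φ : ρ ≃ X := Fintype.equivOfCardEq hcard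
  have hφ : M.submatrix id φ ∈ doublyStochastic R ρ :=
    mem_doublyStochastic_iff_sum.mpr ⟨fun r s => hM r (φ s),
      fun r => (Equiv.sum_comp φ (M r)).trans (hrow r), fun s => hcol (φ s)⟩
  obtain ⟨K, p, σ, hp, hp_sum, hσ⟩ := exists_perm_lottery_of_mem_doublyStochastic hφ
  refine ⟨K, p, fun k => (σ k).trans φ, hp, hp_sum, fun r x => ?_⟩
  simpa [← Equiv.eq_symm_apply] using hσ r (φ.symm x)

lemma exists_lottery_bijOn_of_card_fiber_eq {ι τ X : Type*} [Fintype ι] [DecidableEq ι]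
    [Nonempty ι] [DecidableEq τ] [Fintype X] (b : ι → X → τ)
    (hb : ∀ i t, #{x | b i x = t} = Fintype.card ι) :
    ∃ (K : ℕ) (p : Fin K → R) (f : Fin K → X → ι),
      (∀ k, 0 < p k) ∧ ∑ k, p k = 1 ∧
      (∀ k i, Set.BijOn (b i) {x | f k x = i} Set.univ) ∧
      ∀ i x, ∑ k, (if f k x = i then p k else 0) = 1 / Fintype.card ι := by
  classical
  have hsurj (i : ι) : Function.Surjective (b i) := fun t => by
    obtain ⟨x, hx⟩ := card_pos.mp ((hb i t).symm ▸ Fintype.card_pos)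
    exact ⟨x, (mem_filter.mp hx).2⟩
  have : Fintype τ := Fintype.ofSurjective _ (hsurj (Classical.arbitrary ι))
  let M : Matrix (τ × ι) X R := fun r x => if b r.2 x = r.1 then 1 / Fintype.card ι else 0
  have hM (r x) : 0 ≤ M r x := by
    simp only [M]
    split_ifs <;> positivity
  have hrow (r) : ∑ x, M r x = 1 := by simp [M, ← sum_filter, hb]
  have hcol (x) : ∑ r, M r x = 1 := by simp [M, Fintype.sum_prod_type_right]
  obtain ⟨K, p, σ, hp, hp_sum, hσ⟩ := exists_equiv_lottery_of_sums_eq_one hM hrow hcol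
  have mem_block (k : Fin K) (i : ι) (t : τ) : b i (σ k (t, i)) = t := by
    by_contra hne
    refine not_of_sum_ite_eq_zero hp (P := fun j => σ j (t, i) = σ k (t, i)) ?_ k rfl
    simp [hσ, M, hne]
  refine ⟨K, p, fun k x => ((σ k).symm x).2, hp, hp_sum,
    fun k i => bijOn_symm_snd_eq (mem_block k i), fun i x => ?_⟩
  have howner (k : Fin K) : ((σ k).symm x).2 = i ↔ σ k (b i x, i) = x :=
    symm_snd_eq_iff (mem_block k i)
  simp only [howner, hσ, M, if_true]

end Lottery

section Ranking

lemma exists_equiv_antitone_comp {α X R : Type*} [Fintype α] [LinearOrder α] [Fintype X]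
    [LinearOrder R] (h : Fintype.card α = Fintype.card X) (w : X → R) :
    ∃ e : α ≃ X, Antitone (w ∘ e) := by
  let pos : α ≃o Fin (Fintype.card X) := (Fintype.orderIsoFinOfCardEq α h).symm
  let label : Fin (Fintype.card X) ≃ X := (Fintype.equivFin X).symm
  let u : Fin (Fintype.card X) → Rᵒᵈ := OrderDual.toDual ∘ w ∘ label
  refine ⟨pos.toEquiv.trans ((Tuple.sort u).trans label), fun a a' haa' => ?_⟩
  exact Tuple.monotone_sort u (pos.monotone haa')

/-- The block of the item `x` under the ranking `e`, which lists the items along the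
lexicographic order, so that `e (toLex (t, a))` is the `a`-th item of the `t`-th block. -/
def rankBlock {α β X : Type*} (e : α ×ₗ β ≃ X) (x : X) : α :=
  (ofLex (e.symm x)).1

lemma card_rankBlock_fiber {α β X : Type*} [DecidableEq α] [Fintype β] [Fintype X]
    (e : α ×ₗ β ≃ X) (t : α) : #{x | rankBlock e x = t} = Fintype.card β := by
  refine (card_bij (fun a _ => e (toLex (t, a))) ?_ ?_ ?_).symm
  · exact fun a _ => mem_filter.mpr ⟨mem_univ _, by simp [rankBlock]⟩
  · simp
  · intro x hx
    refine ⟨(ofLex (e.symm x)).2, mem_univ _, ?_⟩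
    simp [← (mem_filter.mp hx).2, rankBlock]

lemma exists_mem_iff_of_bijOn_rankBlock {α β X : Type*} {e : α ×ₗ β ≃ X} {A : Set X}
    (hA : Set.BijOn (rankBlock e) A Set.univ) :
    ∃ c : α → β, ∀ t a, e (toLex (t, a)) ∈ A ↔ c t = a := by
  have hrep (t : α) : ∃ a, e (toLex (t, a)) ∈ A := by
    obtain ⟨x, hx, rfl⟩ := hA.surjOn (Set.mem_univ t)
    exact ⟨(ofLex (e.symm x)).2, by simpa [rankBlock] using hx⟩
  choose c hc using hrep
  refine ⟨c, fun t a => ⟨fun ha => ?_, fun h => h ▸ hc t⟩⟩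
  simpa using hA.injOn (hc t) ha (by simp [rankBlock])

lemma sum_eq_sum_blocks_of_mem_iff {α β X R : Type*} [Fintype α] [AddCommMonoid R] {e : α ×ₗ β ≃ X}
    {A : Finset X} {c : α → β} (hc : ∀ t a, e (toLex (t, a)) ∈ A ↔ c t = a) (w : X → R) :
    ∑ x ∈ A, w x = ∑ t, w (e (toLex (t, c t))) := by
  refine (sum_nbij (fun t => e (toLex (t, c t))) (fun t _ => (hc t _).mpr rfl)
    (fun s _ t _ h => congrArg (fun q => (ofLex q).1) (e.injective h)) (fun x hx => ?_)
    fun _ _ => rfl).symm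
  obtain ⟨⟨t, a⟩, rfl⟩ := e.surjective x
  exact ⟨t, mem_coe.mpr (mem_univ t), by rw [← (hc t a).mp hx]; rfl⟩

end Ranking

section BlockSums

lemma sum_lex {α β R : Type*} [Fintype α] [Fintype β] [AddCommMonoid R] (u : α ×ₗ β → R) :
    ∑ q, u q = ∑ t, ∑ a, u (toLex (t, a)) :=
  (Equiv.sum_comp toLex u).symm.trans (Fintype.sum_prod_type _)

lemma antitone_lex_succ_le_castSucc {R β : Type*} [Preorder R] [Preorder β] {T : ℕ}
    {u : Fin (T + 1) ×ₗ β → R} (hu : Antitone u) (t : Fin T) (a a' : β) :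
    u (toLex (t.succ, a)) ≤ u (toLex (t.castSucc, a')) :=
  hu (Prod.Lex.toLex_le_toLex.mpr (.inl Fin.castSucc_lt_succ))

variable {R : Type*} [AddCommMonoid R] [PartialOrder R] [IsOrderedAddMonoid R]

lemma sum_le_sum_add_of_succ_le_castSucc {T : ℕ} {h x : Fin (T + 1) → R}
    (hlast : 0 ≤ x (Fin.last T)) (hsucc : ∀ t : Fin T, h t.succ ≤ x t.castSucc)
    {s : Fin (T + 1)} (hlt : ∀ t < s, h t ≤ x t) :
    ∑ t, h t ≤ ∑ t, x t + h s := by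
  have hle (j : Fin T) : h (s.succAbove j) ≤ x j.castSucc := by
    rcases lt_or_ge j.castSucc s with hj | hj
    · simpa [Fin.succAbove_of_castSucc_lt _ _ hj] using hlt _ hj
    · simpa [Fin.succAbove_of_le_castSucc _ _ hj] using hsucc j
  calc ∑ t, h t = ∑ j, h (s.succAbove j) + h s := by rw [Fin.sum_univ_succAbove h s, add_comm]
    _ ≤ ∑ j : Fin T, x j.castSucc + h s := by gcongr with j; exact hle j
    _ ≤ ∑ t, x t + h s := by
      rw [Fin.sum_univ_castSucc x]
      gcongr
      exact le_add_of_nonneg_right hlast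

lemma sum_le_smul_sum_heads {α : Type*} [Fintype α] [PartialOrder α] {k : ℕ}
    {u : α ×ₗ Fin (k + 1) → R} (hu : Antitone u) :
    ∑ q, u q ≤ (k + 1) • ∑ t, u (toLex (t, 0)) := by
  rw [sum_lex, smul_sum]
  refine sum_le_sum fun t _ => ?_
  have hle (a : Fin (k + 1)) : u (toLex (t, a)) ≤ u (toLex (t, 0)) :=
    hu (Prod.Lex.toLex_le_toLex.mpr (.inr ⟨rfl, Fin.zero_le a⟩))
  simpa using sum_le_card_nsmul univ _ _ fun a _ => hle a

variable {T k : ℕ} {u : Fin (T + 1) ×ₗ Fin (k + 1) → R}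

lemma sum_heads_le_sum_add (hu : Antitone u) (hu_nonneg : ∀ q, 0 ≤ u q)
    {c : Fin (T + 1) → Fin (k + 1)} {s : Fin (T + 1)} (hs : ∀ t < s, c t = 0) :
    ∑ t, u (toLex (t, 0)) ≤ ∑ t, u (toLex (t, c t)) + u (toLex (s, 0)) :=
  sum_le_sum_add_of_succ_le_castSucc (hu_nonneg _) (fun t => antitone_lex_succ_le_castSucc hu t _ _)
    fun t ht => by rw [hs t ht]

/-- Each chosen item pays for the last item of its own block and for all but the last item of the
next block. -/
lemma sum_le_sum_top_add_smul_sum (hu : Antitone u) (hu_nonneg : ∀ q, 0 ≤ u q)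
    (c : Fin (T + 1) → Fin (k + 1)) :
    ∑ q, u q ≤ ∑ a : Fin k, u (toLex (0, a.castSucc)) + (k + 1) • ∑ t, u (toLex (t, c t)) := by
  have hlast (t : Fin (T + 1)) : u (toLex (t, Fin.last k)) ≤ u (toLex (t, c t)) :=
    hu (Prod.Lex.toLex_le_toLex.mpr (.inr ⟨rfl, Fin.le_last _⟩))
  have hnext : ∑ t : Fin T, ∑ a : Fin k, u (toLex (t.succ, a.castSucc)) ≤
      k • ∑ t, u (toLex (t, c t)) :=
    calc _ ≤ ∑ t : Fin T, k • u (toLex (t.castSucc, c t.castSucc)) :=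
          sum_le_sum fun t _ => by
            simpa using sum_le_card_nsmul univ _ _ fun (a : Fin k) _ =>
              antitone_lex_succ_le_castSucc hu t a.castSucc (c t.castSucc)
      _ ≤ ∑ t, k • u (toLex (t, c t)) := by
          rw [Fin.sum_univ_castSucc (n := T)]
          exact le_add_of_nonneg_right (nsmul_nonneg (hu_nonneg _) k)
      _ = _ := (smul_sum ..).symm
  calc ∑ q, u q
      = ∑ a : Fin k, u (toLex (0, a.castSucc)) +
          (∑ t : Fin T, ∑ a : Fin k, u (toLex (t.succ, a.castSucc)) +
            ∑ t, u (toLex (t, Fin.last k))) := by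
        simp_rw [sum_lex, Fin.sum_univ_castSucc (n := k), sum_add_distrib]
        rw [Fin.sum_univ_succ, add_assoc]
    _ ≤ _ := by
        rw [succ_nsmul]
        gcongr with t
        exact hlast t

end BlockSums

section Padding

/-- The bundle of agent `i` in the allocation that gives each item `g` to agent `f g`. Encoding
allocations by assignments makes restricting them to fewer items a composition. -/
def bundle {X ι : Type*} [Fintype X] [DecidableEq ι] (f : X → ι) (i : ι) : Finset X :=
  {g | f g = i}

lemma mem_bundle {X ι : Type*} [Fintype X] [DecidableEq ι] {f : X → ι} {i : ι} {g : X} :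
    g ∈ bundle f i ↔ f g = i := by
  simp [bundle]

lemma isPartition_bundle {X : Type*} [Fintype X] [DecidableEq X] {n : ℕ} (f : X → Fin n) :
    IsPartition univ (bundle f) := by
  refine ⟨fun i => subset_univ _, fun i j hij => ?_, fun g _ => ⟨f g, mem_bundle.mpr rfl⟩⟩
  refine disjoint_left.mpr fun g hi hj => hij ?_
  rw [← mem_bundle.mp hi, mem_bundle.mp hj]

variable {n m r : ℕ}

lemma sum_append_zero {R : Type*} [AddCommMonoid R] (v : Fin m → R) :
    ∑ g, Fin.append v (0 : Fin r → R) g = ∑ g, v g := by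
  simp [Fin.sum_univ_add]

lemma sum_bundle_append_zero {R ι : Type*} [AddCommMonoid R] [DecidableEq ι] (v : Fin m → R)
    (f : Fin (m + r) → ι) (i : ι) :
    ∑ g ∈ bundle f i, Fin.append v (0 : Fin r → R) g =
      ∑ g ∈ bundle (f ∘ Fin.castAdd r) i, v g := by
  simp [bundle, sum_filter, Fin.sum_univ_add]

lemma append_zero_nonneg {R : Type*} [Zero R] [Preorder R] {v : Fin m → R} (hv : ∀ g, 0 ≤ v g)
    (g : Fin (m + r)) : 0 ≤ Fin.append v (0 : Fin r → R) g := by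
  cases g using Fin.addCases <;> simp [hv]

lemma Prop1For.of_append_zero {v : Fin n → Fin m → ℝ} {f : Fin (m + r) → Fin n} {i : Fin n}
    (h : Prop1For (fun j => Fin.append (v j) (0 : Fin r → ℝ)) (bundle f) i) :
    Prop1For v (bundle (f ∘ Fin.castAdd r)) i := by
  simp only [Prop1For, sum_append_zero, sum_bundle_append_zero] at h
  rcases h with h | ⟨g, hg, h⟩
  · exact .inl h
  rw [sum_insert hg, sum_bundle_append_zero] at h
  cases g using Fin.addCases with
  | left g =>
    have hg' : g ∉ bundle (f ∘ Fin.castAdd r) i := by simpa [mem_bundle] using hg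
    exact .inr ⟨g, hg', by simpa [sum_insert hg'] using h⟩
  | right g => exact .inl (by simpa using h)

lemma mms_le_mms_append_zero [NeZero n] (v : Fin m → ℝ) :
    mms n v ≤ mms n (Fin.append v (0 : Fin r → ℝ)) := by
  refine ciSup_le fun f => le_ciSup_of_le (Set.finite_range _).bddAbove
    (Fin.append f fun _ : Fin r => 0) (le_of_eq (iInf_congr fun t => ?_))
  have hf : Fin.append f (fun _ : Fin r => 0) ∘ Fin.castAdd r = f := by ext; simp
  exact (hf ▸ sum_bundle_append_zero v (Fin.append f fun _ : Fin r => 0) t).symm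

end Padding

section Fairness

lemma mms_add_sum_le_sum {n m : ℕ} {v : Fin m → ℝ} (hv : ∀ g, 0 ≤ v g) {S : Finset (Fin m)}
    (hS : #S < n) : mms n v + ∑ g ∈ S, v g ≤ ∑ g, v g := by
  have : NeZero n := ⟨by omega⟩
  rw [← le_sub_iff_add_le, ← sum_sdiff_eq_sub (subset_univ S)]
  refine ciSup_le fun f => ?_
  obtain ⟨t, ht⟩ : ∃ t, t ∉ S.image f := by
    by_contra! hall
    have hcard := card_le_card fun t (_ : t ∈ univ) => hall t
    rw [card_univ, Fintype.card_fin] at hcard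
    exact (hcard.trans card_image_le).not_gt hS
  refine (ciInf_le (Set.finite_range _).bddBelow t).trans
    (sum_le_sum_of_subset_of_nonneg (fun g hg => ?_) fun g _ _ => hv g)
  rw [mem_filter] at hg
  exact mem_sdiff.mpr ⟨hg.1, fun hgS => ht (mem_image.mpr ⟨g, hgS, hg.2⟩)⟩

variable {T k m : ℕ} {e : Fin (T + 1) ×ₗ Fin (k + 1) ≃ Fin m}

lemma prop1For_of_bijOn_rankBlock {v : Fin (k + 1) → Fin m → ℝ} {i : Fin (k + 1)}
    (hv : ∀ g, 0 ≤ v i g) (he : Antitone (v i ∘ e)) {A : Fin (k + 1) → Finset (Fin m)}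
    (hA : Set.BijOn (rankBlock e) (A i) Set.univ) : Prop1For v A i := by
  obtain ⟨c, hc⟩ := exists_mem_iff_of_bijOn_rankBlock hA
  have hsum : ∑ g ∈ A i, v i g = ∑ t, v i (e (toLex (t, c t))) :=
    sum_eq_sum_blocks_of_mem_iff hc _
  have hheads : (∑ g, v i g) / (k + 1 : ℕ) ≤ ∑ t, v i (e (toLex (t, 0))) := by
    rw [div_le_iff₀' (by positivity), ← nsmul_eq_mul, ← Equiv.sum_comp e]
    exact sum_le_smul_sum_heads he
  by_cases hall : ∀ t, c t = 0
  · left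
    simpa [hsum, hall] using hheads
  · obtain ⟨s, hs, hmin⟩ := wellFounded_lt.has_min {t | c t ≠ 0} (not_forall.mp hall)
    have hbest : e (toLex (s, 0)) ∉ A i := fun h => hs ((hc s 0).mp h)
    refine .inr ⟨e (toLex (s, 0)), hbest, hheads.trans ?_⟩
    rw [sum_insert hbest, hsum, add_comm (v i _)]
    exact sum_heads_le_sum_add he (fun q => hv (e q)) fun t ht => not_not.mp fun h => hmin t h ht

lemma mms_div_le_sum_of_bijOn_rankBlock {v : Fin m → ℝ} (hv : ∀ g, 0 ≤ v g)
    (he : Antitone (v ∘ e)) {A : Finset (Fin m)} (hA : Set.BijOn (rankBlock e) A Set.univ) :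
    mms (k + 1) v / (k + 1 : ℕ) ≤ ∑ g ∈ A, v g := by
  obtain ⟨c, hc⟩ := exists_mem_iff_of_bijOn_rankBlock hA
  let top (a : Fin k) : Fin m := e (toLex (0, a.castSucc))
  have htop : Function.Injective top := fun a b h => by simpa [top] using h
  have hcard : #(univ.image top) < k + 1 := by
    simp [card_image_of_injective univ htop]
  have hmms := mms_add_sum_le_sum hv hcard
  have hcharge := sum_le_sum_top_add_smul_sum he (fun q => hv (e q)) c
  rw [div_le_iff₀' (by positivity), ← nsmul_eq_mul, sum_eq_sum_blocks_of_mem_iff hc]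
  rw [sum_image htop.injOn] at hmms
  simp only [Function.comp_apply, Equiv.sum_comp e v] at hcharge
  linarith

end Fairness

/-- For any `n` agents with additive valuations there is a finite distribution over
allocations, each simultaneously PROP1 and `1/n`-MMS, whose marginals give every item to
every agent with probability exactly `1/n`. -/
theorem equal_division_PROP1_and_MMS_realizable (n m : ℕ) (hn : 1 ≤ n)
    (v : Fin n → Fin m → ℝ) (hv : ∀ i g, 0 ≤ v i g) :
    ∃ (K : ℕ) (p : Fin K → ℝ) (A : Fin K → Fin n → Finset (Fin m)),
      (∀ k, 0 ≤ p k) ∧ (∑ k, p k = 1) ∧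
      (∀ k, IsPartition Finset.univ (A k)) ∧
      (∀ k, ∀ i, Prop1For v (A k) i) ∧
      (∀ k, ∀ i, mms n (v i) / n ≤ ∑ g ∈ A k i, v i g) ∧
      (∀ i g, ∑ k, (if g ∈ A k i then p k else 0) = 1 / n) := by
  obtain ⟨k, rfl⟩ : ∃ k, n = k + 1 := ⟨n - 1, by omega⟩
  let r := m * k + (k + 1)
  let V (i : Fin (k + 1)) : Fin (m + r) → ℝ := Fin.append (v i) 0
  have hV (i) : ∀ g, 0 ≤ V i g := append_zero_nonneg (hv i)
  have hcard : Fintype.card (Fin (m + 1) ×ₗ Fin (k + 1)) = Fintype.card (Fin (m + r)) := by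
    simp only [Fintype.card_lex, Fintype.card_prod, Fintype.card_fin, r]
    ring
  choose e he using fun i => exists_equiv_antitone_comp hcard (V i)
  obtain ⟨K, p, f, hp, hp_sum, hf, hmarginal⟩ :=
    exists_lottery_bijOn_of_card_fiber_eq (R := ℝ) (fun i => rankBlock (e i))
      fun i => card_rankBlock_fiber (e i)
  have hbij (j i) : Set.BijOn (rankBlock (e i)) (bundle (f j) i) Set.univ := by
    simpa [bundle] using hf j i
  refine ⟨K, p, fun j => bundle (f j ∘ Fin.castAdd r), fun j => (hp j).le, hp_sum,
    fun j => isPartition_bundle _, fun j i => ?_, fun j i => ?_, fun i g => ?_⟩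
  · exact (prop1For_of_bijOn_rankBlock (hV i) (he i) (hbij j i)).of_append_zero
  · rw [← sum_bundle_append_zero]
    exact (div_le_div_of_nonneg_right (mms_le_mms_append_zero (v i)) (by positivity)).trans
      (mms_div_le_sum_of_bijOn_rankBlock (hV i) (he i) (hbij j i))
  · simpa [mem_bundle] using hmarginal i (Fin.castAdd r g)
end
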